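/- arXiv:1403.2528 — 8 statements merged into one kernel-verified Lean document; each statement's English description precedes it below -/
import Mathlib

section
/- Let m_i, m_e, ν_i, ν_e, e, c > 0 and b ≥ 0 be real numbers; set C_α = m_α²ν_α² + e²b²/c² for α = i, e, and define K_i = (1/C_i)·[[m_iν_i, e b/c],[−e b/c, m_iν_i]] and K_e = (1/C_e)·[[m_eν_e, −e b/c],[e b/c, m_eν_e]]. Then K_e (K_i + K_e)^{-1} K_i = K_i (K_i + K_e)^{-1} K_e = (1/(m_iν_i + m_eν_e)) · I₂, where I₂ is the 2×2 identity matrix. -/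
open Matrix

/-!
`K_i` and `K_e` are the inverses of `A = p + w J` and `B = q - w J`, where `J` is the rotation by
a right angle, `p = m_i ν_i`, `q = m_e ν_e` and `w = e b / c`. The magnetic contributions have
opposite signs, so `A + B = (p + q) I`. As with resistances in parallel,
`A⁻¹ + B⁻¹ = A⁻¹ (A + B) B⁻¹`, hence `B⁻¹ (A⁻¹ + B⁻¹)⁻¹ A⁻¹ = (A + B)⁻¹`, and the right-hand side
is symmetric in `A` and `B`.
-/

theorem inv_mul_inv_add_inv_inv_mul_inv {n R : Type*} [Fintype n] [DecidableEq n] [CommRing R]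
    {A B : Matrix n n R} (hA : IsUnit A) (hB : IsUnit B) :
    B⁻¹ * (A⁻¹ + B⁻¹)⁻¹ * A⁻¹ = (A + B)⁻¹ := by
  have hA_det : IsUnit A.det := A.isUnit_iff_isUnit_det.mp hA
  have hB_det : IsUnit B.det := B.isUnit_iff_isUnit_det.mp hB
  calc
    B⁻¹ * (A⁻¹ + B⁻¹)⁻¹ * A⁻¹ = B⁻¹ * (A⁻¹ * (A + B) * B⁻¹)⁻¹ * A⁻¹ := by
      rw [Matrix.inv_add_inv (iff_of_true hA hB)]
    _ = B⁻¹ * (B * ((A + B)⁻¹ * A)) * A⁻¹ := by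
      rw [Matrix.mul_inv_rev, Matrix.mul_inv_rev, nonsing_inv_nonsing_inv A hA_det,
        nonsing_inv_nonsing_inv B hB_det]
    _ = (A + B)⁻¹ := by
      rw [nonsing_inv_mul_cancel_left B _ hB_det, mul_nonsing_inv_cancel_right A _ hA_det]

theorem inv_planeConformal {𝕜 : Type*} [Field 𝕜] (p w : 𝕜) :
    !![p, -w; w, p]⁻¹ = (1 / (p ^ 2 + w ^ 2)) • !![p, w; -w, p] := by
  have h_det : !![p, -w; w, p].det = p ^ 2 + w ^ 2 := by
    rw [det_fin_two_of]
    ring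
  rw [inv_def, adjugate_fin_two_of, h_det, Ring.inverse_eq_inv', neg_neg, one_div]

theorem stmt_2_general {𝕜 : Type*} [Field 𝕜] {p q w : 𝕜}
    (hp : p ^ 2 + w ^ 2 ≠ 0) (hq : q ^ 2 + w ^ 2 ≠ 0) (hpq : p + q ≠ 0) :
    let Ki : Matrix (Fin 2) (Fin 2) 𝕜 := (1 / (p ^ 2 + w ^ 2)) • !![p, w; -w, p]
    let Ke : Matrix (Fin 2) (Fin 2) 𝕜 := (1 / (q ^ 2 + w ^ 2)) • !![q, -w; w, q]
    Ke * (Ki + Ke)⁻¹ * Ki = (1 / (p + q)) • (1 : Matrix (Fin 2) (Fin 2) 𝕜) ∧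
      Ki * (Ki + Ke)⁻¹ * Ke = (1 / (p + q)) • (1 : Matrix (Fin 2) (Fin 2) 𝕜) := by
  intro Ki Ke
  let A : Matrix (Fin 2) (Fin 2) 𝕜 := !![p, -w; w, p]
  let B : Matrix (Fin 2) (Fin 2) 𝕜 := !![q, -(-w); -w, q]
  have hA : IsUnit A := (planeConformalMatrix p w hp).isUnit
  have hB : IsUnit B := (planeConformalMatrix q (-w) (by rwa [neg_sq])).isUnit
  have hKi : Ki = A⁻¹ := (inv_planeConformal p w).symm
  have hKe : Ke = B⁻¹ := by rw [inv_planeConformal, neg_neg, neg_sq]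
  have h_add : A + B = (p + q) • (1 : Matrix (Fin 2) (Fin 2) 𝕜) := by
    simp [A, B, one_fin_two]
  have h_add_inv : (A + B)⁻¹ = (1 / (p + q)) • (1 : Matrix (Fin 2) (Fin 2) 𝕜) := by
    refine inv_eq_right_inv ?_
    rw [h_add, smul_mul_smul_comm, mul_one, mul_one_div_cancel hpq, one_smul]
  rw [hKi, hKe, ← h_add_inv]
  refine ⟨inv_mul_inv_add_inv_inv_mul_inv hA hB, ?_⟩
  rw [add_comm A⁻¹, add_comm A]
  exact inv_mul_inv_add_inv_inv_mul_inv hB hA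

/-- The key identity `K_e (K_i+K_e)⁻¹ K_i = K_i (K_i+K_e)⁻¹ K_e = (m_iν_i+m_eν_e)⁻¹ I₂`
in the Darcy-law derivation for the two-fluid Euler–Maxwell system. -/
theorem stmt_2 (mi me νi νe e c b : ℝ)
    (hmi : 0 < mi) (hme : 0 < me) (hνi : 0 < νi) (hνe : 0 < νe)
    (he : 0 < e) (hc : 0 < c) (hb : 0 ≤ b) :
    let Ci : ℝ := mi ^ 2 * νi ^ 2 + e ^ 2 * b ^ 2 / c ^ 2
    let Ce : ℝ := me ^ 2 * νe ^ 2 + e ^ 2 * b ^ 2 / c ^ 2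
    let Ki : Matrix (Fin 2) (Fin 2) ℝ :=
      (1 / Ci) • !![mi * νi, e * b / c; -(e * b / c), mi * νi]
    let Ke : Matrix (Fin 2) (Fin 2) ℝ :=
      (1 / Ce) • !![me * νe, -(e * b / c); e * b / c, me * νe]
    Ke * (Ki + Ke)⁻¹ * Ki = (1 / (mi * νi + me * νe)) • (1 : Matrix (Fin 2) (Fin 2) ℝ) ∧
      Ki * (Ki + Ke)⁻¹ * Ke = (1 / (mi * νi + me * νe)) • (1 : Matrix (Fin 2) (Fin 2) ℝ) := by
  simpa only [mul_pow, div_pow] using stmt_2_general (p := mi * νi) (q := me * νe) (w := e * b / c)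
    (by positivity) (by positivity) (by positivity)
end

section
/- Let n > 0, m_i, m_e, ν_i, ν_e, T_i, T_e, e, c > 0 and b ≥ 0 be real numbers; put q_i = e, q_e = −e, and define the real 2×2 matrices A_α = [[−m_αν_α n, (q_α n/c) b],[−(q_α n/c) b, −m_αν_α n]] for α = i, e. Then A_i, A_e and q_i n A_i^{-1} − q_e n A_e^{-1} are invertible, and the matrix G := −q_i n A_i^{-1} (q_i n A_i^{-1} − q_e n A_e^{-1})^{-1} (T_i A_i^{-1} − T_e A_e^{-1}) + T_i A_i^{-1} equals −((T_i + T_e)/(n(m_iν_i + m_eν_e))) · I₂, where I₂ is the 2×2 identity matrix. In particular G is a scalar matrix independent of b. -/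
open Matrix

/-!
Write `A = A_i`, `B = A_e` and `S = A + B`. From `A⁻¹ + B⁻¹ = B⁻¹ S A⁻¹` we get
`A⁻¹ (A⁻¹ + B⁻¹)⁻¹ = S⁻¹ B`, and then, because `B A⁻¹ = S A⁻¹ - 1`, the matrix `G` collapses to
`(T_i + T_e) S⁻¹`. The charges being opposite, the Lorentz terms cancel in `S`, which is therefore a
scalar matrix that does not see the magnetic field.
-/

section RingInverse

open scoped Ring

lemma isUnit_smul_of_isUnit {S R : Type*} [CommSemiring S] [Semiring R] [Algebra S R]
    {k : S} {x : R} (hk : IsUnit k) (hx : IsUnit x) : IsUnit (k • x) := by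
  rw [Algebra.smul_def]
  exact (hk.map (algebraMap S R)).mul hx

lemma smul_mul_inverse_smul {S R : Type*} [CommSemiring S] [Semiring R] [Algebra S R]
    {k : S} (hk : IsUnit k) (x y : R) : (k • x) * (k • y)⁻¹ʳ = x * y⁻¹ʳ := by
  have hκ : IsUnit (algebraMap S R k) := hk.map (algebraMap S R)
  calc (k • x) * (k • y)⁻¹ʳ
      = (k • x) * (y⁻¹ʳ * (algebraMap S R k)⁻¹ʳ) := by
        rw [Algebra.smul_def k y, Ring.inverse_mul (.inl hκ)]
    _ = x * (y⁻¹ʳ * (k • (algebraMap S R k)⁻¹ʳ)) := by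
        simp only [smul_mul_assoc, mul_smul_comm]
    _ = x * y⁻¹ʳ := by
        rw [Algebra.smul_def, Ring.mul_inverse_cancel _ hκ, mul_one]

lemma inverse_add_inverse_eq_mul_add_mul {R : Type*} [Semiring R] {A B : R}
    (hA : IsUnit A) (hB : IsUnit B) : A⁻¹ʳ + B⁻¹ʳ = B⁻¹ʳ * (A + B) * A⁻¹ʳ := by
  rw [add_comm, Ring.inverse_add_inverse (iff_of_true hB hA), add_comm B A]

lemma isUnit_inverse_add_inverse {R : Type*} [Semiring R] {A B : R}
    (hA : IsUnit A) (hB : IsUnit B) (hAB : IsUnit (A + B)) : IsUnit (A⁻¹ʳ + B⁻¹ʳ) := by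
  rw [inverse_add_inverse_eq_mul_add_mul hA hB]
  exact (hB.ringInverse.mul hAB).mul hA.ringInverse

lemma inverse_mul_inverse_inverse_add_inverse {R : Type*} [Semiring R] {A B : R}
    (hA : IsUnit A) (hB : IsUnit B) : A⁻¹ʳ * (A⁻¹ʳ + B⁻¹ʳ)⁻¹ʳ = (A + B)⁻¹ʳ * B := by
  rw [inverse_add_inverse_eq_mul_add_mul hA hB, Ring.inverse_mul (.inr hA.ringInverse),
    Ring.inverse_mul (.inl hB.ringInverse), Ring.inverse_inverse hA, Ring.inverse_inverse hB,
    Ring.inverse_mul_cancel_left _ _ hA]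

lemma neg_smul_inverse_mul_add_smul_inverse {S R : Type*} [CommSemiring S] [Ring R] [Algebra S R]
    {A B : R} (hA : IsUnit A) (hB : IsUnit B) (hAB : IsUnit (A + B))
    {k : S} (hk : IsUnit k) (p q : S) :
    -((k • A⁻¹ʳ) * (k • (A⁻¹ʳ + B⁻¹ʳ))⁻¹ʳ * (p • A⁻¹ʳ - q • B⁻¹ʳ)) + p • A⁻¹ʳ =
      (p + q) • (A + B)⁻¹ʳ := by
  have hBA : B * A⁻¹ʳ = (A + B) * A⁻¹ʳ - 1 := by
    rw [add_mul, Ring.mul_inverse_cancel _ hA, add_sub_cancel_left]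
  calc -((k • A⁻¹ʳ) * (k • (A⁻¹ʳ + B⁻¹ʳ))⁻¹ʳ * (p • A⁻¹ʳ - q • B⁻¹ʳ)) + p • A⁻¹ʳ
      = -((A + B)⁻¹ʳ * (p • (B * A⁻¹ʳ) - q • (B * B⁻¹ʳ))) + p • A⁻¹ʳ := by
        rw [smul_mul_inverse_smul hk, inverse_mul_inverse_inverse_add_inverse hA hB, mul_assoc,
          mul_sub B, mul_smul_comm, mul_smul_comm]
    _ = -(p • (A⁻¹ʳ - (A + B)⁻¹ʳ) - q • (A + B)⁻¹ʳ) + p • A⁻¹ʳ := by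
        rw [hBA, Ring.mul_inverse_cancel _ hB, mul_sub, mul_smul_comm, mul_smul_comm, mul_sub,
          Ring.inverse_mul_cancel_left _ _ hAB, mul_one]
    _ = (p + q) • (A + B)⁻¹ʳ := by
        rw [smul_sub, add_smul]
        abel

end RingInverse

lemma inv_smul_one {ι K : Type*} [Fintype ι] [DecidableEq ι] [Field K] {r : K} (hr : r ≠ 0) :
    (r • (1 : Matrix ι ι K))⁻¹ = r⁻¹ • 1 :=
  inv_eq_right_inv (by rw [smul_mul_smul_comm, mul_inv_cancel₀ hr, one_smul, one_mul])

/-- The matrix `A_α` of the momentum balance of one species in the plane normal to the magnetic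
field, with friction coefficient `a = m_α ν_α n` and Lorentz coefficient `t = q_α n b / c`. -/
def momentumMatrix {R : Type*} [Ring R] (a t : R) : Matrix (Fin 2) (Fin 2) R :=
  !![-a, t; -t, -a]

lemma det_momentumMatrix {R : Type*} [CommRing R] (a t : R) :
    (momentumMatrix a t).det = a ^ 2 + t ^ 2 := by
  rw [momentumMatrix, det_fin_two_of]
  ring

lemma isUnit_momentumMatrix_iff {R : Type*} [CommRing R] {a t : R} :
    IsUnit (momentumMatrix a t) ↔ IsUnit (a ^ 2 + t ^ 2) := by
  rw [isUnit_iff_isUnit_det, det_momentumMatrix]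

lemma momentumMatrix_add_momentumMatrix_neg {R : Type*} [Ring R] (a a' t : R) :
    momentumMatrix a t + momentumMatrix a' (-t) = (-(a + a')) • 1 := by
  ext i j
  fin_cases i <;> fin_cases j <;> simp [momentumMatrix, add_comm]

lemma isUnit_momentumMatrix_of_sq_add_sq_ne_zero {K : Type*} [Field K] {n m ν q c b : K}
    (hn : n ≠ 0) (hc : c ≠ 0) (h : (m * ν * c) ^ 2 + (q * b) ^ 2 ≠ 0) :
    IsUnit (momentumMatrix (m * ν * n) ((q * n / c) * b)) := by
  have hdet : (m * ν * n) ^ 2 + ((q * n / c) * b) ^ 2 =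
      (n / c) ^ 2 * ((m * ν * c) ^ 2 + (q * b) ^ 2) := by
    field_simp
  rw [isUnit_momentumMatrix_iff, hdet, isUnit_iff_ne_zero]
  exact mul_ne_zero (pow_ne_zero 2 (div_ne_zero hn hc)) h

theorem stmt_3_general {K : Type*} [Field K] {n mi me νi νe e c b : K} (Ti Te : K)
    (hn : n ≠ 0) (he : e ≠ 0) (hc : c ≠ 0) (hν : mi * νi + me * νe ≠ 0)
    (hdi : (mi * νi * c) ^ 2 + (e * b) ^ 2 ≠ 0) (hde : (me * νe * c) ^ 2 + (e * b) ^ 2 ≠ 0) :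
    let qi : K := e
    let qe : K := -e
    let Ai := momentumMatrix (mi * νi * n) ((qi * n / c) * b)
    let Ae := momentumMatrix (me * νe * n) ((qe * n / c) * b)
    let M := (qi * n) • Ai⁻¹ - (qe * n) • Ae⁻¹
    IsUnit Ai ∧ IsUnit Ae ∧ IsUnit M ∧
      -(((qi * n) • Ai⁻¹) * M⁻¹ * (Ti • Ai⁻¹ - Te • Ae⁻¹)) + Ti • Ai⁻¹ =
        (-((Ti + Te) / (n * (mi * νi + me * νe)))) • (1 : Matrix (Fin 2) (Fin 2) K) := by
  intro qi qe Ai Ae M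
  have hAi : IsUnit Ai := isUnit_momentumMatrix_of_sq_add_sq_ne_zero hn hc hdi
  have hAe : IsUnit Ae :=
    isUnit_momentumMatrix_of_sq_add_sq_ne_zero hn hc (by rwa [neg_mul, neg_sq])
  have hk : IsUnit (e * n) := (mul_ne_zero he hn).isUnit
  have hs : -(n * (mi * νi + me * νe)) ≠ 0 := neg_ne_zero.mpr (mul_ne_zero hn hν)
  have hsum : Ai + Ae = (-(n * (mi * νi + me * νe))) • 1 := by
    have hLorentz : Ae = momentumMatrix (me * νe * n) (-((qi * n / c) * b)) :=
      congrArg (momentumMatrix (me * νe * n)) (by ring)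
    rw [hLorentz, momentumMatrix_add_momentumMatrix_neg]
    congr 1
    ring
  have hM : M = (e * n) • (Ai⁻¹ + Ae⁻¹) := by
    simp only [M, qi, qe, neg_mul, neg_smul, sub_neg_eq_add, smul_add]
  have hsumUnit : IsUnit (Ai + Ae) := hsum ▸ isUnit_smul_of_isUnit hs.isUnit isUnit_one
  refine ⟨hAi, hAe, ?_, ?_⟩
  · rw [hM]
    simp only [nonsing_inv_eq_ringInverse]
    exact isUnit_smul_of_isUnit hk (isUnit_inverse_add_inverse hAi hAe hsumUnit)
  · have hG := neg_smul_inverse_mul_add_smul_inverse hAi hAe hsumUnit hk Ti Te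
    simp only [← nonsing_inv_eq_ringInverse] at hG
    rw [hM, hG, hsum, inv_smul_one hs, smul_smul, inv_neg, mul_neg, div_eq_mul_inv]

/-- The velocity coefficient matrix `G` in the Darcy-law derivation is the scalar matrix
`-((T_i+T_e)/(n(m_iν_i+m_eν_e))) I₂`, independent of the background magnetic field `b`. -/
theorem stmt_3 (n mi me νi νe Ti Te e c b : ℝ)
    (hn : 0 < n) (hmi : 0 < mi) (hme : 0 < me) (hνi : 0 < νi) (hνe : 0 < νe)
    (hTi : 0 < Ti) (hTe : 0 < Te) (he : 0 < e) (hc : 0 < c) (hb : 0 ≤ b) :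
    let qi : ℝ := e
    let qe : ℝ := -e
    let Ai : Matrix (Fin 2) (Fin 2) ℝ :=
      !![-(mi * νi * n), (qi * n / c) * b; -((qi * n / c) * b), -(mi * νi * n)]
    let Ae : Matrix (Fin 2) (Fin 2) ℝ :=
      !![-(me * νe * n), (qe * n / c) * b; -((qe * n / c) * b), -(me * νe * n)]
    let M : Matrix (Fin 2) (Fin 2) ℝ := (qi * n) • Ai⁻¹ - (qe * n) • Ae⁻¹
    IsUnit Ai ∧ IsUnit Ae ∧ IsUnit M ∧
      -(((qi * n) • Ai⁻¹) * M⁻¹ * (Ti • Ai⁻¹ - Te • Ae⁻¹)) + Ti • Ai⁻¹ =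
        (-((Ti + Te) / (n * (mi * νi + me * νe)))) • (1 : Matrix (Fin 2) (Fin 2) ℝ) :=
  stmt_3_general Ti Te hn.ne' he.ne' hc.ne' (by positivity) (by positivity) (by positivity)
end

section
/- Fix k ∈ ℝ³ and positive constants m_i, m_e, ν_i, ν_e, e, c; put μ₂ = c² m_iν_i m_eν_e /(4π e² (m_iν_i + m_eν_e)). Suppose û_i, û_e, Ê : ℝ → ℂ³ and B̂ : ℝ → ℂ³ is differentiable with k·B̂(t) = 0 for all t, and for all t: −e Ê(t) + m_iν_i û_i(t) = 0, e Ê(t) + m_eν_e û_e(t) = 0, −c (i k)×B̂(t) + 4π e (û_i(t) − û_e(t)) = 0, and B̂'(t) + c (i k)×Ê(t) = 0. Then for all t: Ê(t) = (c/(4π e²))·(m_iν_i m_eν_e/(m_iν_i + m_eν_e)) (i k)×B̂(t), û_i(t) = (c/(4π e))·(m_eν_e/(m_iν_i + m_eν_e)) (i k)×B̂(t), û_e(t) = −(c/(4π e))·(m_iν_i/(m_iν_i + m_eν_e)) (i k)×B̂(t), and B̂'(t) = −μ₂ |k|² B̂(t); in particular B̂(t) = e^{−μ₂|k|²t} B̂(0).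 -/
open Real Complex

/-- Cross product on `ℂ³`. -/
def cross3 (u v : Fin 3 → ℂ) : Fin 3 → ℂ :=
  ![u 1 * v 2 - u 2 * v 1, u 2 * v 0 - u 0 * v 2, u 0 * v 1 - u 1 * v 0]

/-!
Adding the momentum balances eliminates the electric field: the friction forces on the two species
cancel, so both velocities are multiples of their difference, which Ampère's law identifies with a
multiple of `ik × B`. Hence `E = η (ik × B)`, and Faraday's law reads `B' = -cη ik × (ik × B)`.
As `k · B = 0`, the double cross product is `|k|² B`, which leaves a scalar linear differential
equation.
-/

open scoped Matrix

section DarcyLaw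

variable {K V : Type*} [Field K] [AddCommGroup V] [Module K V] {α β : K} {u w : V}

theorem left_eq_smul_sub_of_smul_add_smul_eq_zero (hαβ : α + β ≠ 0) (h : α • u + β • w = 0) :
    u = (β / (α + β)) • (u - w) := by
  rw [div_eq_inv_mul, mul_smul, eq_inv_smul_iff₀ hαβ]
  linear_combination (norm := module) h

theorem right_eq_neg_smul_sub_of_smul_add_smul_eq_zero (hαβ : α + β ≠ 0)
    (h : α • u + β • w = 0) : w = -((α / (α + β)) • (u - w)) := by
  rw [add_comm] at hαβ h
  rw [← smul_neg, neg_sub, add_comm α]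
  exact left_eq_smul_sub_of_smul_add_smul_eq_zero hαβ h

theorem darcy_law_of_momentum_balance_of_ampere {c e p : K} {E X : V} (hαβ : α + β ≠ 0)
    (he : e ≠ 0) (hp : p ≠ 0) (hu : -(e • E) + α • u = 0) (hw : e • E + β • w = 0)
    (hampere : -(c • X) + (p * e) • (u - w) = 0) :
    E = (c / (p * e ^ 2) * (α * β / (α + β))) • X ∧
      u = (c / (p * e) * (β / (α + β))) • X ∧
      w = -((c / (p * e) * (α / (α + β))) • X) := by
  have hmomentum : α • u + β • w = 0 := by
    linear_combination (norm := module) hu + hw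
  have hcurrent : u - w = (c / (p * e)) • X := by
    rw [div_eq_inv_mul, mul_smul, eq_inv_smul_iff₀ (mul_ne_zero hp he)]
    linear_combination (norm := module) hampere
  have hu_eq : u = (c / (p * e) * (β / (α + β))) • X := by
    rw [left_eq_smul_sub_of_smul_add_smul_eq_zero hαβ hmomentum, hcurrent, smul_smul, mul_comm]
  have hw_eq : w = -((c / (p * e) * (α / (α + β))) • X) := by
    rw [right_eq_neg_smul_sub_of_smul_add_smul_eq_zero hαβ hmomentum, hcurrent, smul_smul,
      mul_comm]
  have hforce : E = e⁻¹ • α • u := by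
    rw [eq_inv_smul_iff₀ he]
    linear_combination (norm := module) -hu
  refine ⟨?_, hu_eq, hw_eq⟩
  rw [hforce, hu_eq, smul_smul, smul_smul]
  congr 1
  field_simp

end DarcyLaw

theorem cross_cross_self_of_dotProduct_eq_zero {R : Type*} [CommRing R] {v w : Fin 3 → R}
    (h : v ⬝ᵥ w = 0) : v ⨯₃ (v ⨯₃ w) = -(v ⬝ᵥ v) • w := by
  rw [cross_cross_eq_smul_sub_smul', h, zero_smul, zero_sub, neg_smul]

theorem cross3_eq_crossProduct (u v : Fin 3 → ℂ) : cross3 u v = u ⨯₃ v := rfl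

theorem cross3_smul (a : ℂ) (u v : Fin 3 → ℂ) : cross3 u (a • v) = a • cross3 u v := by
  simp only [cross3_eq_crossProduct, map_smul]

theorem cross3_I_smul_cross3_I_smul {k b : Fin 3 → ℂ} (h : k ⬝ᵥ b = 0) :
    cross3 (I • k) (cross3 (I • k) b) = (k ⬝ᵥ k) • b := by
  have h_orth : (I • k) ⬝ᵥ b = 0 := by rw [smul_dotProduct, h, smul_zero]
  have h_sq : (I • k) ⬝ᵥ (I • k) = -(k ⬝ᵥ k) := by
    rw [smul_dotProduct, dotProduct_smul, smul_smul, I_mul_I, neg_one_smul]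
  rw [cross3_eq_crossProduct, cross3_eq_crossProduct,
    cross_cross_self_of_dotProduct_eq_zero h_orth, h_sq, neg_neg]

theorem eq_neg_smul_of_faraday_of_ohm {k b b' E : Fin 3 → ℂ} {c η : ℂ} (hk : k ⬝ᵥ b = 0)
    (hfaraday : b' + c • cross3 (I • k) E = 0) (hohm : E = η • cross3 (I • k) b) :
    b' = -(c * η * (k ⬝ᵥ k)) • b := by
  rw [hohm, cross3_smul, cross3_I_smul_cross3_I_smul hk, smul_smul, smul_smul] at hfaraday
  rw [eq_neg_of_add_eq_zero_left hfaraday, neg_smul, mul_assoc]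

theorem eq_exp_smul_of_hasDerivAt_smul {V : Type*} [NormedAddCommGroup V] [NormedSpace ℂ V]
    {a : ℂ} {f : ℝ → V} (hf : ∀ t, HasDerivAt f (a • f t) t) (t : ℝ) :
    f t = Complex.exp (a * t) • f 0 := by
  have h_deriv (s : ℝ) : HasDerivAt (fun s : ℝ ↦ Complex.exp (-(a * s)) • f s) 0 s := by
    have h_exp : HasDerivAt (fun s : ℝ ↦ Complex.exp (-(a * s)))
        (Complex.exp (-(a * s)) * -(a * 1)) s :=
      ((ofRealCLM.hasDerivAt (x := s)).const_mul a).neg.cexp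
    have h_cancel : Complex.exp (-(a * s)) • a • f s +
        (Complex.exp (-(a * s)) * -(a * 1)) • f s = 0 := by
      module
    exact h_cancel ▸ h_exp.smul (hf s)
  have h_const : Complex.exp (-(a * t)) • f t = f 0 := by
    simpa using is_const_of_deriv_eq_zero (fun s ↦ (h_deriv s).differentiableAt)
      (fun s ↦ (h_deriv s).deriv) t 0
  rw [← h_const, smul_smul, ← Complex.exp_add, add_neg_cancel, Complex.exp_zero, one_smul]

theorem stmt_6_general (k : Fin 3 → ℂ) (mi me νi νe e c : ℂ)
    (hfriction : mi * νi + me * νe ≠ 0) (he : e ≠ 0)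
    (ui ue E B : ℝ → Fin 3 → ℂ) (hB : Differentiable ℝ B)
    (hBorth : ∀ t, k ⬝ᵥ B t = 0)
    (hion : ∀ t, -(e • E t) + (mi * νi) • ui t = 0)
    (helectron : ∀ t, e • E t + (me * νe) • ue t = 0)
    (hampere : ∀ t, -(c • cross3 (I • k) (B t)) + (4 * π * e) • (ui t - ue t) = 0)
    (hfaraday : ∀ t, deriv B t + c • cross3 (I • k) (E t) = 0) :
    let μ₂ : ℂ := c ^ 2 * mi * νi * me * νe / (4 * π * e ^ 2 * (mi * νi + me * νe))
    (∀ t, E t = (c / (4 * π * e ^ 2) * (mi * νi * me * νe / (mi * νi + me * νe))) •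
        cross3 (I • k) (B t)) ∧
      (∀ t, ui t = (c / (4 * π * e) * (me * νe / (mi * νi + me * νe))) •
        cross3 (I • k) (B t)) ∧
      (∀ t, ue t = -((c / (4 * π * e) * (mi * νi / (mi * νi + me * νe))) •
        cross3 (I • k) (B t))) ∧
      (∀ t, deriv B t = -(μ₂ * (k ⬝ᵥ k)) • B t) ∧
      (∀ t, B t = Complex.exp (-(μ₂ * (k ⬝ᵥ k) * t)) • B 0) := by
  intro μ₂
  have hdarcy (t : ℝ) := darcy_law_of_momentum_balance_of_ampere hfriction he
    (by simp [pi_ne_zero] : (4 * π : ℂ) ≠ 0) (hion t) (helectron t) (hampere t)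
  simp only [← mul_assoc (mi * νi), forall_and] at hdarcy
  obtain ⟨hE, hui, hue⟩ := hdarcy
  have hdiffusion (t : ℝ) : deriv B t = -(μ₂ * (k ⬝ᵥ k)) • B t := by
    rw [eq_neg_smul_of_faraday_of_ohm (hBorth t) (hfaraday t) (hE t)]
    congr 3
    simp only [μ₂]
    field_simp
  refine ⟨hE, hui, hue, hdiffusion, fun t ↦ ?_⟩
  rw [← neg_mul]
  exact eq_exp_smul_of_hasDerivAt_smul (fun s ↦ hdiffusion s ▸ (hB s).hasDerivAt) t

/-- Fourier-transformed (at frequency `k`) asymptotic transverse electromagnetic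
system: the magnetic field obeys the diffusion equation with magnetic diffusion
coefficient `μ₂ = c²m_iν_im_eν_e/(4πe²(m_iν_i+m_eν_e))`, and the velocities and
electric field are given by the generalized Darcy law. -/
theorem stmt_6 (k : Fin 3 → ℝ) (mi me νi νe e c : ℝ)
    (hmi : 0 < mi) (hme : 0 < me) (hνi : 0 < νi) (hνe : 0 < νe)
    (he : 0 < e) (hc : 0 < c)
    (ui ue E B : ℝ → Fin 3 → ℂ)
    (hB : Differentiable ℝ B)
    (hBorth : ∀ t : ℝ, ∑ j, (k j : ℂ) * B t j = 0)
    (h1 : ∀ (t : ℝ) (j : Fin 3),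
      -((e : ℂ) * E t j) + (mi : ℂ) * (νi : ℂ) * ui t j = 0)
    (h2 : ∀ (t : ℝ) (j : Fin 3),
      (e : ℂ) * E t j + (me : ℂ) * (νe : ℂ) * ue t j = 0)
    (h3 : ∀ (t : ℝ) (j : Fin 3),
      -((c : ℂ) * cross3 (fun i => Complex.I * (k i : ℂ)) (B t) j)
        + 4 * (π : ℂ) * (e : ℂ) * (ui t j - ue t j) = 0)
    (h4 : ∀ (t : ℝ) (j : Fin 3),
      deriv B t j + (c : ℂ) * cross3 (fun i => Complex.I * (k i : ℂ)) (E t) j = 0) :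
    let μ₂ : ℝ := c ^ 2 * mi * νi * me * νe / (4 * π * e ^ 2 * (mi * νi + me * νe))
    let ksq : ℝ := ∑ j, (k j) ^ 2
    (∀ (t : ℝ) (j : Fin 3), E t j =
        ((c / (4 * π * e ^ 2) : ℝ) : ℂ) * ((mi * νi * me * νe / (mi * νi + me * νe) : ℝ) : ℂ) *
          cross3 (fun i => Complex.I * (k i : ℂ)) (B t) j) ∧
      (∀ (t : ℝ) (j : Fin 3), ui t j =
        ((c / (4 * π * e) : ℝ) : ℂ) * ((me * νe / (mi * νi + me * νe) : ℝ) : ℂ) *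
          cross3 (fun i => Complex.I * (k i : ℂ)) (B t) j) ∧
      (∀ (t : ℝ) (j : Fin 3), ue t j =
        -(((c / (4 * π * e) : ℝ) : ℂ) * ((mi * νi / (mi * νi + me * νe) : ℝ) : ℂ) *
          cross3 (fun i => Complex.I * (k i : ℂ)) (B t) j)) ∧
      (∀ (t : ℝ) (j : Fin 3), deriv B t j = -((μ₂ * ksq : ℝ) : ℂ) * B t j) ∧
      (∀ (t : ℝ) (j : Fin 3), B t j = Complex.exp (-((μ₂ * ksq * t : ℝ) : ℂ)) * B 0 j) := by
  have hfriction : (mi * νi + me * νe : ℂ) ≠ 0 := by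
    exact_mod_cast (by positivity : mi * νi + me * νe ≠ 0)
  simpa [funext_iff, I_mul, Pi.smul_def, dotProduct, ← pow_two] using
    stmt_6_general (fun j ↦ k j) mi me νi νe e c hfriction (ofReal_ne_zero.mpr he.ne')
      ui ue E B hB hBorth (fun t ↦ funext (h1 t)) (fun t ↦ funext (h2 t))
      (fun t ↦ funext (h3 t)) (fun t ↦ funext (h4 t))
end

section
/- Let m_i, m_e, ν_i, ν_e, e > 0 be real constants and define the real cubic g(λ) = λ³ + (ν_i + ν_e)λ² + (ν_iν_e + 4π(e²/m_i + e²/m_e))λ + 4π(e²ν_e/m_i + e²ν_i/m_e). Then g(0) > 0, g(−(ν_i + ν_e)) < 0, g is strictly increasing on [0, ∞) and on (−∞, −(ν_i + ν_e)]; consequently g has at least one real root, and every real root σ of g satisfies −(ν_i + ν_e) < σ < 0. -/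
open Real

/-!
For a monic cubic `x³ + a x² + b x + c`, the value at `0` is `c` and the value at `-a` is `c - a b`,
so a sign change on `[-a, 0]` is the Routh–Hurwitz condition `0 < c < a b`. If `a, b ≥ 0`, the cubic
increases on `[0, ∞)`, and the substitution `x ↦ -a - x` turns it into the negative of another such
cubic, so it also increases on `(-∞, -a]`. Hence no root lies outside `(-a, 0)`. For the two-fluid
cubic the Routh–Hurwitz condition follows by expanding the product.
-/

open Set

theorem monic_cubic_reflect {R : Type*} [CommRing R] (a b c x : R) :
    x ^ 3 + a * x ^ 2 + b * x + c =
      -((-a - x) ^ 3 + 2 * a * (-a - x) ^ 2 + (a ^ 2 + b) * (-a - x) + (a * b - c)) := by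
  ring

section OrderedRing

variable {R : Type*} [CommRing R] [LinearOrder R] [IsStrictOrderedRing R]

theorem strictMonoOn_monic_cubic_Ici {a b : R} (ha : 0 ≤ a) (hb : 0 ≤ b) (c : R) :
    StrictMonoOn (fun x ↦ x ^ 3 + a * x ^ 2 + b * x + c) (Ici 0) := by
  intro x (hx : 0 ≤ x) y _ hxy
  have hcube : x ^ 3 < y ^ 3 := by gcongr
  have hsquare : a * x ^ 2 ≤ a * y ^ 2 := by gcongr
  have hlinear : b * x ≤ b * y := by gcongr
  linarith

theorem strictMonoOn_monic_cubic_Iic {a b : R} (ha : 0 ≤ a) (hab : 0 ≤ a ^ 2 + b) (c : R) :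
    StrictMonoOn (fun x ↦ x ^ 3 + a * x ^ 2 + b * x + c) (Iic (-a)) := by
  intro x (hx : x ≤ -a) y (hy : y ≤ -a) hxy
  have hreflected := strictMonoOn_monic_cubic_Ici (mul_nonneg zero_le_two ha) hab (a * b - c)
    (sub_nonneg.2 hy) (sub_nonneg.2 hx) (sub_lt_sub_left hxy (-a))
  simpa only [monic_cubic_reflect a b c] using neg_lt_neg hreflected

theorem monic_cubic_apply_neg_lt_zero_iff {a b c : R} :
    (-a) ^ 3 + a * (-a) ^ 2 + b * (-a) + c < 0 ↔ c < a * b := by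
  have hvalue : (-a) ^ 3 + a * (-a) ^ 2 + b * (-a) + c = c - a * b := by ring
  rw [hvalue, sub_neg]

theorem two_fluid_routh_hurwitz_lt {x y α β : R} (hx : 0 < x) (hy : 0 < y) (hα : 0 ≤ α)
    (hβ : 0 ≤ β) : α * y + β * x < (x + y) * (x * y + (α + β)) := by
  have hgap : 0 < (x + y) * (x * y) + (α * x + β * y) := by positivity
  linear_combination hgap

end OrderedRing

theorem mem_Ioo_of_monotoneOn_Iic_of_monotoneOn_Ici {α β : Type*} [LinearOrder α] [Preorder β]
    {f : α → β} {l u x : α} (hl : MonotoneOn f (Iic l)) (hu : MonotoneOn f (Ici u))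
    (hlx : f l < f x) (hxu : f x < f u) : x ∈ Ioo l u :=
  ⟨lt_of_not_ge fun hx ↦ (hl hx self_mem_Iic hx).not_gt hlx,
    lt_of_not_ge fun hx ↦ (hu self_mem_Ici hx hx).not_gt hxu⟩

/-- Elementary properties of the cubic `g` arising as the zero-frequency factor of the
characteristic polynomial of the linearized two-fluid Euler–Maxwell system: it has at
least one real root and every real root lies in `(-(ν_i+ν_e), 0)`. -/
theorem stmt_7 (mi me νi νe e : ℝ)
    (hmi : 0 < mi) (hme : 0 < me) (hνi : 0 < νi) (hνe : 0 < νe) (he : 0 < e) :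
    let g : ℝ → ℝ := fun l =>
      l ^ 3 + (νi + νe) * l ^ 2 + (νi * νe + 4 * π * (e ^ 2 / mi + e ^ 2 / me)) * l +
        4 * π * (e ^ 2 * νe / mi + e ^ 2 * νi / me)
    (0 < g 0 ∧ g (-(νi + νe)) < 0 ∧
      StrictMonoOn g (Set.Ici (0 : ℝ)) ∧ StrictMonoOn g (Set.Iic (-(νi + νe))) ∧
      (∃ σ : ℝ, g σ = 0) ∧
      ∀ σ : ℝ, g σ = 0 → -(νi + νe) < σ ∧ σ < 0) := by
  intro g
  have hRouthHurwitz : 4 * π * (e ^ 2 * νe / mi + e ^ 2 * νi / me) <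
      (νi + νe) * (νi * νe + 4 * π * (e ^ 2 / mi + e ^ 2 / me)) := by
    have hα : 0 ≤ 4 * π * (e ^ 2 / mi) := by positivity
    have hβ : 0 ≤ 4 * π * (e ^ 2 / me) := by positivity
    linear_combination two_fluid_routh_hurwitz_lt hνi hνe hα hβ
  have hpos : 0 < g 0 := by
    have hconst : 0 < 4 * π * (e ^ 2 * νe / mi + e ^ 2 * νi / me) := by positivity
    linear_combination hconst
  have hneg : g (-(νi + νe)) < 0 := monic_cubic_apply_neg_lt_zero_iff.2 hRouthHurwitz
  have hIci : StrictMonoOn g (Ici 0) :=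
    strictMonoOn_monic_cubic_Ici (by positivity) (by positivity) _
  have hIic : StrictMonoOn g (Iic (-(νi + νe))) :=
    strictMonoOn_monic_cubic_Iic (by positivity) (by positivity) _
  have hroot : ∃ σ, g σ = 0 :=
    mem_range_of_exists_le_of_exists_ge (by fun_prop) ⟨_, hneg.le⟩ ⟨_, hpos.le⟩
  refine ⟨hpos, hneg, hIci, hIic, hroot, fun σ hσ ↦ ?_⟩
  exact mem_Ioo_of_monotoneOn_Iic_of_monotoneOn_Ici hIic.monotoneOn hIci.monotoneOn
    (hneg.trans_eq hσ.symm) (hσ.trans_lt hpos)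
end

section
/- Let m_i, m_e, ν_i, ν_e, e > 0 be real constants and g(λ) = λ³ + (ν_i + ν_e)λ² + (ν_iν_e + 4π(e²/m_i + e²/m_e))λ + 4π(e²ν_e/m_i + e²ν_i/m_e). Then every complex root σ ∈ ℂ of g satisfies Re σ < 0. -/
open Real

/-!
With `α = 4πe²/mi` and `β = 4πe²/me` the cubic is
`g(σ) = σ (σ + νi) (σ + νe) + α (σ + νe) + β (σ + νi)`. Dividing by `(σ + νi) (σ + νe)`, which does
not vanish for `Re σ ≥ 0`, gives `σ + α / (σ + νi) + β / (σ + νe)`. Inversion preserves the open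
right half-plane, so this quotient has positive real part and `g(σ) ≠ 0`. The same argument works
for any number of fluid species.
-/

theorem re_ofReal_div_pos {a : ℝ} {w : ℂ} (ha : 0 < a) (hw : 0 < w.re) :
    0 < ((a : ℂ) / w).re := by
  rw [div_eq_mul_inv, Complex.re_ofReal_mul, Complex.inv_re]
  exact mul_pos ha (div_pos hw (Complex.normSq_pos.mpr (Complex.ne_zero_of_re_pos hw)))

section

variable {ι : Type*} {s : Finset ι} {a : ι → ℝ} {w : ι → ℂ} {z : ℂ}

theorem re_add_sum_ofReal_div_pos (hs : s.Nonempty) (ha : ∀ j ∈ s, 0 < a j)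
    (hw : ∀ j ∈ s, 0 < (w j).re) (hz : 0 ≤ z.re) :
    0 < (z + ∑ j ∈ s, (a j : ℂ) / (z + w j)).re := by
  rw [Complex.add_re, Complex.re_sum]
  exact add_pos_of_nonneg_of_pos hz <| Finset.sum_pos
    (fun j hj => re_ofReal_div_pos (ha j hj) (add_pos_of_nonneg_of_pos hz (hw j hj))) hs

theorem mul_prod_add_sum_mul_prod_erase_eq_prod_mul {K : Type*} [Field K] [DecidableEq ι]
    {f : ι → K} (hf : ∀ j ∈ s, f j ≠ 0) (c : ι → K) (x : K) :
    x * ∏ j ∈ s, f j + ∑ j ∈ s, c j * ∏ k ∈ s.erase j, f k =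
      (∏ j ∈ s, f j) * (x + ∑ j ∈ s, c j / f j) := by
  rw [mul_add, mul_comm x, Finset.mul_sum]
  congr 1
  refine Finset.sum_congr rfl fun j hj => ?_
  rw [← Finset.mul_prod_erase s f hj]
  field_simp [hf j hj]

theorem re_neg_of_mul_prod_add_sum_mul_prod_erase_eq_zero [DecidableEq ι] (hs : s.Nonempty)
    (ha : ∀ j ∈ s, 0 < a j) (hw : ∀ j ∈ s, 0 < (w j).re)
    (h : z * ∏ j ∈ s, (z + w j) + ∑ j ∈ s, (a j : ℂ) * ∏ k ∈ s.erase j, (z + w k) = 0) :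
    z.re < 0 := by
  by_contra! hz
  have hne : ∀ j ∈ s, z + w j ≠ 0 := fun j hj =>
    Complex.ne_zero_of_re_pos (add_pos_of_nonneg_of_pos hz (hw j hj))
  have hquot : z + ∑ j ∈ s, (a j : ℂ) / (z + w j) ≠ 0 :=
    Complex.ne_zero_of_re_pos (re_add_sum_ofReal_div_pos hs ha hw hz)
  rw [mul_prod_add_sum_mul_prod_erase_eq_prod_mul hne] at h
  exact mul_ne_zero (Finset.prod_ne_zero_iff.mpr hne) hquot h

end

theorem re_neg_of_mul_mul_add_mul_add_mul_eq_zero {a b : ℝ} {v w z : ℂ} (ha : 0 < a) (hb : 0 < b)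
    (hv : 0 < v.re) (hw : 0 < w.re)
    (h : z * ((z + v) * (z + w)) + (a * (z + w) + b * (z + v)) = 0) : z.re < 0 := by
  refine re_neg_of_mul_prod_add_sum_mul_prod_erase_eq_zero (s := Finset.univ) (a := ![a, b])
    (w := ![v, w]) Finset.univ_nonempty (by simp [Fin.forall_fin_two, ha, hb])
    (by simp [Fin.forall_fin_two, hv, hw]) ?_
  have h₀ : Finset.univ.erase (0 : Fin 2) = {1} := rfl
  have h₁ : Finset.univ.erase (1 : Fin 2) = {0} := rfl
  simpa [Fin.sum_univ_two, Fin.prod_univ_two, h₀, h₁] using h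

/-- Every complex root of the zero-frequency cubic `g` of the linearized two-fluid
Euler–Maxwell system has negative real part. -/
theorem stmt_9 (mi me νi νe e : ℝ)
    (hmi : 0 < mi) (hme : 0 < me) (hνi : 0 < νi) (hνe : 0 < νe) (he : 0 < e) :
    ∀ σ : ℂ, σ ^ 3 + ((νi + νe : ℝ) : ℂ) * σ ^ 2
        + ((νi * νe + 4 * π * (e ^ 2 / mi + e ^ 2 / me) : ℝ) : ℂ) * σ
        + ((4 * π * (e ^ 2 * νe / mi + e ^ 2 * νi / me) : ℝ) : ℂ) = 0 →
      σ.re < 0 := by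
  intro σ hσ
  have hα : 0 < 4 * π * (e ^ 2 / mi) := by positivity
  have hβ : 0 < 4 * π * (e ^ 2 / me) := by positivity
  have hg : σ * ((σ + νi) * (σ + νe)) + (((4 * π * (e ^ 2 / mi) : ℝ) : ℂ) * (σ + νe)
      + ((4 * π * (e ^ 2 / me) : ℝ) : ℂ) * (σ + νi)) = 0 := by
    rw [← hσ]
    push_cast
    ring
  exact re_neg_of_mul_mul_add_mul_add_mul_eq_zero (v := νi) (w := νe) hα hβ hνi hνe hg
end

section
/- Let m_i, m_e, ν_i, ν_e, T_i, T_e, e, c > 0 with q_i = e, q_e = −e. There exist constants κ₁, κ₂ ∈ (0, 1) and λ, c₀, C₀ > 0 such that for every k ∈ ℝ³ and every solution (ρ̂_i, ρ̂_e, û_i, û_e, Ê, B̂) of the Fourier-transformed linearized two-fluid Euler–Maxwell system at frequency k, the functional ℰ(t) = Σ_{α=i,e}(T_α|ρ̂_α(t)|² + m_α|û_α(t)|²) + (1/(4π))(|Ê(t)|² + |B̂(t)|²) + κ₁ (1+|k|²)^{-1} Σ_{α=i,e} m_α Re(û_α(t)·conj(i k ρ̂_α(t))) − κ₁ (1+|k|²)^{-2}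 |k|² Σ_{α=i,e} (4π m_α q_α/T_α) Re(û_α(t)·conj(Ê(t))) + κ₁κ₂ (1+|k|²)^{-2} Re(Ê(t)·conj(−(i k)×B̂(t))) satisfies: (i) c₀|Û(t)|² ≤ ℰ(t) ≤ C₀|Û(t)|² for all t ≥ 0, and (ii) ℰ is differentiable with ℰ'(t) + λ|k|²(1+|k|²)^{-2} ℰ(t) ≤ 0 for all t > 0. -/
open Real Complex ComplexConjugate

/-- Squared Hermitian norm on `ℂ³`. -/
noncomputable def hsq (v : Fin 3 → ℂ) : ℝ := ∑ j, Complex.normSq (v j)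

/-- Real part of the Hermitian pairing `∑ u_j conj(v_j)` on `ℂ³`. -/
noncomputable def hre (u v : Fin 3 → ℂ) : ℝ := (∑ j, u j * conj (v j)).re

/-- The vector `i k` with components `i k_j`. -/
def ikv (k : Fin 3 → ℝ) : Fin 3 → ℂ := fun j => Complex.I * (k j : ℂ)

/-!
Along solutions the physical energy loses only `∑ ν_α m_α |û_α|²`: friction does not see the
densities or the fields. Each corrector pairs two unknowns coupled by the equations, so that its
derivative contains a good term for an undamped unknown and errors that can be absorbed. The
density corrector uses the pressure to produce `-|k|² |ρ̂|²`, and Gauss's law gives its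
electric-field term a favourable sign. The electric corrector uses the Lorentz force to produce
`|Ê|²`, again with a favourable contribution of Gauss's law, up to a coupling `û · (i k × B̂)`. The
magnetic corrector uses Ampère's law to produce `-|k|² |B̂|²`, up to `|k|² |Ê|²`. The weights
`(1+|k|²)⁻¹`, `|k|² (1+|k|²)⁻²` and `(1+|k|²)⁻²` make the velocity errors uniform in `k`.
Choosing `κ₂` small absorbs the electric error of the magnetic corrector into the electric damping,
the small parameter of Young's inequality in the electric corrector is then chosen relative to `κ₂`,
and `κ₁` small absorbs the velocity errors into the friction.
-/

section WeightedSums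

variable {ι : Type*} [Fintype ι] {a : ι → ℝ}

lemma exists_pos_forall_mul_sum_le (ha : ∀ α, 0 < a α) :
    ∃ b > 0, ∀ x : ι → ℝ, (∀ α, 0 ≤ x α) → b * ∑ α, x α ≤ ∑ α, a α * x α := by
  obtain ⟨b, hb, hlt⟩ := Pi.exists_forall_pos_add_lt ha
  refine ⟨b, hb, fun x hx => ?_⟩
  rw [Finset.mul_sum]
  gcongr with α
  exacts [hx α, by simpa using (hlt α).le]

lemma sum_mul_le_sum_mul_sum (ha : ∀ α, 0 ≤ a α) {x : ι → ℝ} (hx : ∀ α, 0 ≤ x α) :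
    ∑ α, a α * x α ≤ (∑ α, a α) * ∑ α, x α := by
  rw [Finset.mul_sum]
  gcongr with α
  exacts [hx α, Finset.single_le_sum (fun β _ => ha β) (Finset.mem_univ α)]

end WeightedSums

section HermitianPairing

variable {ι : Type*}

lemma hre_comm (u v : Fin 3 → ℂ) : hre u v = hre v u := by
  simp only [hre, Complex.re_sum, Complex.mul_re, Complex.conj_re, Complex.conj_im]
  exact Finset.sum_congr rfl fun _ _ => by ring

lemma hre_self (u : Fin 3 → ℂ) : hre u u = hsq u := by
  simp [hre, hsq, Complex.mul_conj]

lemma hre_smul_left (a : ℝ) (u v : Fin 3 → ℂ) : hre (a • u) v = a * hre u v := by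
  simp [hre, Finset.mul_sum, mul_assoc]

lemma hre_sub_left (u v w : Fin 3 → ℂ) : hre (u - v) w = hre u w - hre v w := by
  simp [hre, sub_mul, Finset.sum_sub_distrib]

lemma hre_neg_left (u v : Fin 3 → ℂ) : hre (-u) v = -hre u v := by
  simp [hre]

lemma hre_neg_right (u v : Fin 3 → ℂ) : hre u (-v) = -hre u v := by
  simp [hre]

lemma hre_sum_left (s : Finset ι) (u : ι → Fin 3 → ℂ) (v : Fin 3 → ℂ) :
    hre (∑ α ∈ s, u α) v = ∑ α ∈ s, hre (u α) v := by
  simp only [hre, Finset.sum_apply, Finset.sum_mul, ← Complex.re_sum]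
  rw [Finset.sum_comm]

lemma hsq_nonneg (u : Fin 3 → ℂ) : 0 ≤ hsq u :=
  Finset.sum_nonneg fun _ _ => Complex.normSq_nonneg _

lemma hsq_smul (a : ℝ) (u : Fin 3 → ℂ) : hsq (a • u) = a ^ 2 * hsq u := by
  rw [← hre_self, hre_smul_left, hre_comm, hre_smul_left, hre_self]
  ring

lemma hsq_neg (u : Fin 3 → ℂ) : hsq (-u) = hsq u := by
  simp [hsq]

lemma hre_le_young (u v : Fin 3 → ℂ) {ε : ℝ} (hε : 0 < ε) :
    hre u v ≤ ε * hsq u + hsq v / (4 * ε) := by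
  have h : 0 ≤ hsq ((2 * ε) • u - v) := hsq_nonneg _
  rw [← hre_self, hre_sub_left, hre_comm _ (_ - _), hre_comm _ (_ - _), hre_sub_left, hre_sub_left,
    hre_comm v, hre_self, hre_self, hre_smul_left, hsq_smul] at h
  rw [← sub_le_iff_le_add', le_div_iff₀ (by positivity)]
  linarith

lemma abs_hre_le_young (u v : Fin 3 → ℂ) {ε : ℝ} (hε : 0 < ε) :
    |hre u v| ≤ ε * hsq u + hsq v / (4 * ε) := by
  refine abs_le'.2 ⟨hre_le_young u v hε, ?_⟩
  simpa only [hre_neg_left, hsq_neg] using hre_le_young (-u) v hε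

lemma abs_hre_le (u v : Fin 3 → ℂ) : |hre u v| ≤ hsq u + hsq v := by
  have := abs_hre_le_young u v one_pos
  linarith [hsq_nonneg v]

lemma hsq_sum_smul_le (s : Finset ι) (a : ι → ℝ) (u : ι → Fin 3 → ℂ) :
    hsq (∑ α ∈ s, a α • u α) ≤ (∑ α ∈ s, a α ^ 2) * ∑ α ∈ s, hsq (u α) := by
  simp only [hsq, Complex.normSq_eq_norm_sq, Finset.sum_apply, Pi.smul_apply]
  rw [Finset.sum_comm (s := s), Finset.mul_sum]
  refine Finset.sum_le_sum fun j _ => ?_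
  calc ‖∑ α ∈ s, a α • u α j‖ ^ 2
      ≤ (∑ α ∈ s, |a α| * ‖u α j‖) ^ 2 := by
        gcongr
        simpa only [norm_smul, Real.norm_eq_abs] using norm_sum_le s fun α => a α • u α j
    _ ≤ (∑ α ∈ s, |a α| ^ 2) * ∑ α ∈ s, ‖u α j‖ ^ 2 := Finset.sum_mul_sq_le_sq_mul_sq _ _ _
    _ = (∑ α ∈ s, a α ^ 2) * ∑ α ∈ s, ‖u α j‖ ^ 2 := by simp only [sq_abs]

end HermitianPairing

section FourierSymbols

/-- The squared length `|k|²` of a wave vector. -/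
def waveSq (k : Fin 3 → ℝ) : ℝ := ∑ j, k j ^ 2

/-- The dissipation rate `|k|² / (1 + |k|²)²`. It degenerates at low and at high frequency: the
system has the regularity-loss structure. -/
noncomputable def dissipationRate (k : Fin 3 → ℝ) : ℝ := waveSq k / (1 + waveSq k) ^ 2

/-- The Fourier symbol `ρ ↦ i k ρ` of the gradient. -/
noncomputable def fourierGrad (k : Fin 3 → ℝ) : ℂ →ₗ[ℂ] Fin 3 → ℂ :=
  LinearMap.toSpanSingleton ℂ (Fin 3 → ℂ) (ikv k)

/-- The Fourier symbol `u ↦ i k · u` of the divergence; the product is bilinear, not Hermitian. -/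
noncomputable def fourierDiv (k : Fin 3 → ℝ) : (Fin 3 → ℂ) →ₗ[ℂ] ℂ :=
  dotProductBilin ℂ ℂ (ikv k)

/-- The Fourier symbol `v ↦ i k × v` of the curl. -/
noncomputable def fourierCurl (k : Fin 3 → ℝ) : (Fin 3 → ℂ) →ₗ[ℂ] Fin 3 → ℂ :=
  crossProduct (ikv k)

variable (k : Fin 3 → ℝ)

lemma waveSq_nonneg : 0 ≤ waveSq k :=
  Finset.sum_nonneg fun _ _ => sq_nonneg _

lemma dissipationRate_nonneg : 0 ≤ dissipationRate k :=
  div_nonneg (waveSq_nonneg k) (sq_nonneg _)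

lemma dissipationRate_le : dissipationRate k ≤ (1 + waveSq k)⁻¹ * waveSq k := by
  have hs := waveSq_nonneg k
  rw [dissipationRate, div_eq_inv_mul]
  gcongr
  nlinarith

lemma dissipationRate_mul_le_one : dissipationRate k * (1 + waveSq k) ≤ 1 := by
  have hs := waveSq_nonneg k
  rw [dissipationRate, div_mul_eq_mul_div, div_le_one (by positivity)]
  nlinarith

lemma dissipationRate_le_one : dissipationRate k ≤ 1 := by
  nlinarith [dissipationRate_mul_le_one k, dissipationRate_nonneg k, waveSq_nonneg k]

lemma fourierGrad_apply (ρ : ℂ) (j : Fin 3) : fourierGrad k ρ j = Complex.I * k j * ρ :=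
  mul_comm _ _

lemma fourierDiv_apply (u : Fin 3 → ℂ) : fourierDiv k u = Complex.I * ∑ j, (k j : ℂ) * u j := by
  simp [fourierDiv, ikv, dotProduct, Finset.mul_sum, mul_assoc]

lemma fourierCurl_apply (v : Fin 3 → ℂ) : fourierCurl k v = cross3 (ikv k) v :=
  rfl

lemma hsq_fourierGrad (ρ : ℂ) : hsq (fourierGrad k ρ) = waveSq k * Complex.normSq ρ := by
  simp [hsq, waveSq, fourierGrad_apply, Finset.sum_mul, Complex.normSq_ofReal, sq]

lemma hre_fourierGrad_right (u : Fin 3 → ℂ) (ρ : ℂ) :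
    hre u (fourierGrad k ρ) = -(fourierDiv k u * conj ρ).re := by
  simp only [hre, fourierGrad_apply, fourierDiv_apply, Fin.sum_univ_three, Complex.add_re,
    Complex.add_im, Complex.mul_re, Complex.mul_im, Complex.I_re, Complex.I_im, Complex.ofReal_re,
    Complex.ofReal_im, Complex.conj_re, Complex.conj_im]
  ring

lemma hre_fourierCurl_left (u v : Fin 3 → ℂ) :
    hre (fourierCurl k u) v = hre u (fourierCurl k v) := by
  simp only [hre, fourierCurl_apply, cross3, ikv, Fin.sum_univ_three, Matrix.cons_val,
    Complex.add_re, Complex.sub_re, Complex.sub_im, Complex.mul_re, Complex.mul_im, Complex.I_re,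
    Complex.I_im, Complex.ofReal_re, Complex.ofReal_im, Complex.conj_re, Complex.conj_im]
  ring

lemma hsq_fourierCurl_add_normSq_fourierDiv (u : Fin 3 → ℂ) :
    hsq (fourierCurl k u) + Complex.normSq (fourierDiv k u) = waveSq k * hsq u := by
  simp only [hsq, waveSq, fourierCurl_apply, fourierDiv_apply, cross3, ikv, Fin.sum_univ_three,
    Matrix.cons_val, Complex.normSq_apply, Complex.add_re, Complex.add_im, Complex.sub_re,
    Complex.sub_im, Complex.mul_re, Complex.mul_im, Complex.I_re, Complex.I_im, Complex.ofReal_re,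
    Complex.ofReal_im]
  ring

lemma hsq_fourierCurl_le (u : Fin 3 → ℂ) : hsq (fourierCurl k u) ≤ waveSq k * hsq u := by
  linarith [hsq_fourierCurl_add_normSq_fourierDiv k u, Complex.normSq_nonneg (fourierDiv k u)]

lemma normSq_fourierDiv_le (u : Fin 3 → ℂ) :
    Complex.normSq (fourierDiv k u) ≤ waveSq k * hsq u := by
  linarith [hsq_fourierCurl_add_normSq_fourierDiv k u, hsq_nonneg (fourierCurl k u)]

end FourierSymbols

section Derivatives

variable {t : ℝ}

lemma hasDerivAt_linearMap_comp {V W : Type*} [NormedAddCommGroup V] [NormedSpace ℂ V]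
    [FiniteDimensional ℂ V] [NormedAddCommGroup W] [NormedSpace ℂ W] (L : V →ₗ[ℂ] W)
    {f : ℝ → V} {f' : V} (hf : HasDerivAt f f' t) :
    HasDerivAt (fun τ => L (f τ)) (L f') t :=
  (L.toContinuousLinearMap.restrictScalars ℝ).hasFDerivAt.comp_hasDerivAt t hf

lemma hasDerivAt_hre {u v : ℝ → Fin 3 → ℂ} {u' v' : Fin 3 → ℂ} (hu : HasDerivAt u u' t)
    (hv : HasDerivAt v v' t) :
    HasDerivAt (fun τ => hre (u τ) (v τ)) (hre u' (v t) + hre (u t) v') t := by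
  have hsum : HasDerivAt (fun τ => ∑ j, u τ j * conj (v τ j))
      (∑ j, (u' j * conj (v t j) + u t j * conj (v' j))) t :=
    HasDerivAt.fun_sum fun j _ => (hasDerivAt_pi.1 hu j).mul (hasDerivAt_pi.1 hv j).star
  refine (Complex.reCLM.hasFDerivAt.comp_hasDerivAt t hsum).congr_deriv ?_
  simp [hre, Finset.sum_add_distrib]

lemma hasDerivAt_hsq {u : ℝ → Fin 3 → ℂ} {u' : Fin 3 → ℂ} (hu : HasDerivAt u u' t) :
    HasDerivAt (fun τ => hsq (u τ)) (2 * hre u' (u t)) t := by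
  simp only [← hre_self]
  exact (hasDerivAt_hre hu hu).congr_deriv (by rw [hre_comm (u t), two_mul])

lemma hasDerivAt_normSq {f : ℝ → ℂ} {f' : ℂ} (hf : HasDerivAt f f' t) :
    HasDerivAt (fun τ => Complex.normSq (f τ)) (2 * (f' * conj (f t)).re) t := by
  simp only [Complex.normSq_eq_norm_sq]
  simpa only [Complex.inner] using hf.norm_sq

end Derivatives

/-- The physical parameters of a linearized Euler–Maxwell system with species indexed by `ι`: the
masses, temperatures, friction rates `ν` and signed charges of the species, and the speed of light.
Neutral species are allowed, but not all species may be neutral. -/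
structure EulerMaxwell (ι : Type*) where
  mass : ι → ℝ
  temperature : ι → ℝ
  friction : ι → ℝ
  charge : ι → ℝ
  lightSpeed : ℝ
  mass_pos : ∀ α, 0 < mass α
  temperature_pos : ∀ α, 0 < temperature α
  friction_pos : ∀ α, 0 < friction α
  exists_charge_ne_zero : ∃ α, charge α ≠ 0
  lightSpeed_pos : 0 < lightSpeed

/-- The Fourier coefficients at one frequency of the unknowns of an Euler–Maxwell system, with
the densities and velocities indexed by the species. -/
structure FourierState (ι : Type*) where
  density : ι → ℂ
  velocity : ι → Fin 3 → ℂ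
  electric : Fin 3 → ℂ
  magnetic : Fin 3 → ℂ

namespace FourierState

variable {ι : Type*} [Fintype ι] (z : FourierState ι)

/-- The density part `∑ |ρ̂_α|²` of `|Û|²`. -/
def densitySq : ℝ := ∑ α, Complex.normSq (z.density α)

/-- The velocity part `∑ |û_α|²` of `|Û|²`, the only part damped by the friction. -/
noncomputable def velocitySq : ℝ := ∑ α, hsq (z.velocity α)

/-- The squared norm `|Û|²` of a state. -/
noncomputable def totalSq : ℝ :=
  z.densitySq + z.velocitySq + hsq z.electric + hsq z.magnetic

/-- The velocity average `∑ a_α û_α` with species weights `a`. -/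
noncomputable def weightedVelocity (a : ι → ℝ) : Fin 3 → ℂ := ∑ α, a α • z.velocity α

/-- The corrector `Re(Ê · conj(-(i k) × B̂))`, whose derivative damps the magnetic field. -/
noncomputable def magneticCorrector (k : Fin 3 → ℝ) : ℝ :=
  hre z.electric (-fourierCurl k z.magnetic)

lemma densitySq_nonneg : 0 ≤ z.densitySq :=
  Finset.sum_nonneg fun _ _ => Complex.normSq_nonneg _

lemma velocitySq_nonneg : 0 ≤ z.velocitySq :=
  Finset.sum_nonneg fun _ _ => hsq_nonneg _

lemma totalSq_nonneg : 0 ≤ z.totalSq := by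
  have := z.densitySq_nonneg
  have := z.velocitySq_nonneg
  have := hsq_nonneg z.electric
  have := hsq_nonneg z.magnetic
  unfold totalSq
  positivity

lemma hre_weightedVelocity_left (a : ι → ℝ) (v : Fin 3 → ℂ) :
    hre (z.weightedVelocity a) v = ∑ α, a α * hre (z.velocity α) v := by
  simp only [weightedVelocity, hre_sum_left, hre_smul_left]

lemma hsq_weightedVelocity_le (a : ι → ℝ) :
    hsq (z.weightedVelocity a) ≤ (∑ α, a α ^ 2) * z.velocitySq :=
  hsq_sum_smul_le Finset.univ a z.velocity

lemma abs_hre_weightedVelocity_le (a : ι → ℝ) (v : Fin 3 → ℂ) {ε : ℝ} (hε : 0 < ε) :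
    |hre (z.weightedVelocity a) v|
      ≤ (∑ α, a α ^ 2) * z.velocitySq / (4 * ε) + ε * hsq v := by
  rw [hre_comm]
  refine (abs_hre_le_young v _ hε).trans ?_
  rw [add_comm]
  gcongr
  exact z.hsq_weightedVelocity_le a

lemma abs_hre_weightedVelocity_fourierCurl_le (a : ι → ℝ) (k : Fin 3 → ℝ) (v : Fin 3 → ℂ)
    {ε : ℝ} (hε : 0 < ε) :
    |hre (z.weightedVelocity a) (fourierCurl k v)|
      ≤ waveSq k * ((∑ α, a α ^ 2) * z.velocitySq) / (4 * ε) + ε * hsq v := by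
  have hs := waveSq_nonneg k
  rw [← hre_fourierCurl_left, hre_comm]
  refine (abs_hre_le_young v _ hε).trans ?_
  rw [add_comm]
  gcongr
  exact (hsq_fourierCurl_le k _).trans (by gcongr; exact z.hsq_weightedVelocity_le a)

end FourierState

namespace EulerMaxwell

variable {ι : Type*} (P : EulerMaxwell ι)

/-- The dielectric weights `4π m_α q_α / T_α` of the electric corrector. -/
noncomputable def dielectricWeight (α : ι) : ℝ :=
  4 * π * P.mass α * P.charge α / P.temperature α

/-- The right-hand side of the momentum equation of the species `α`, solved for `∂_t û_α`. -/
noncomputable def acceleration (k : Fin 3 → ℝ) (z : FourierState ι) (α : ι) : Fin 3 → ℂ :=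
  (P.mass α)⁻¹ • (P.charge α • z.electric - P.temperature α • fourierGrad k (z.density α))
    - P.friction α • z.velocity α

lemma mass_mul_hre_acceleration (k : Fin 3 → ℝ) (z : FourierState ι) (α : ι) (v : Fin 3 → ℂ) :
    P.mass α * hre (P.acceleration k z α) v
      = P.charge α * hre z.electric v - P.temperature α * hre (fourierGrad k (z.density α)) v
        - P.mass α * P.friction α * hre (z.velocity α) v := by
  have := (P.mass_pos α).ne'
  simp only [acceleration, hre_sub_left, hre_smul_left]
  field_simp

lemma density_production_le (α : ι) (k : Fin 3 → ℝ) (ρ : ℂ) (u : Fin 3 → ℂ) :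
    P.mass α * Complex.normSq (fourierDiv k u)
        - P.temperature α * (waveSq k * Complex.normSq ρ)
        - P.mass α * P.friction α * hre u (fourierGrad k ρ)
      ≤ (P.mass α + (P.mass α * P.friction α) ^ 2 / (2 * P.temperature α))
          * ((1 + waveSq k) * hsq u)
        - P.temperature α / 2 * (waveSq k * Complex.normSq ρ) := by
  have hm := P.mass_pos α
  have hν := P.friction_pos α
  have hT := P.temperature_pos α
  have hu := hsq_nonneg u
  have hs := waveSq_nonneg k
  have hdiv : P.mass α * Complex.normSq (fourierDiv k u) ≤ P.mass α * (waveSq k * hsq u) := by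
    gcongr
    exact normSq_fourierDiv_le k u
  have hfriction : P.mass α * P.friction α * -hre u (fourierGrad k ρ)
      ≤ (P.mass α * P.friction α) ^ 2 / (2 * P.temperature α) * hsq u
        + P.temperature α / 2 * (waveSq k * Complex.normSq ρ) := by
    calc P.mass α * P.friction α * -hre u (fourierGrad k ρ)
        ≤ P.mass α * P.friction α
          * (P.mass α * P.friction α / (2 * P.temperature α) * hsq u + hsq (fourierGrad k ρ)
            / (4 * (P.mass α * P.friction α / (2 * P.temperature α)))) := by
          gcongr
          exact (neg_le_abs _).trans (abs_hre_le_young _ _ (by positivity))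
      _ = _ := by
          rw [hsq_fourierGrad]
          field_simp
          ring
  have hmu : 0 ≤ P.mass α * hsq u := by positivity
  have hsu : 0 ≤ (P.mass α * P.friction α) ^ 2 / (2 * P.temperature α) * (waveSq k * hsq u) := by
    positivity
  linarith

variable [Fintype ι]

/-- The electric current `∑ q_α û_α`. -/
noncomputable def current (z : FourierState ι) : Fin 3 → ℂ := z.weightedVelocity P.charge

/-- The evolution equations, solved for the time derivatives, and the two constraints at
frequency `k`, imposed on the path `z` of states at the single time `t`. -/
structure IsSolutionAt (k : Fin 3 → ℝ) (z : ℝ → FourierState ι) (t : ℝ) : Prop where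
  continuity : ∀ α, HasDerivAt (fun τ => (z τ).density α) (-fourierDiv k ((z t).velocity α)) t
  momentum : ∀ α, HasDerivAt (fun τ => (z τ).velocity α) (P.acceleration k (z t) α) t
  ampere : HasDerivAt (fun τ => (z τ).electric)
    (P.lightSpeed • fourierCurl k (z t).magnetic - (4 * π) • P.current (z t)) t
  faraday : HasDerivAt (fun τ => (z τ).magnetic)
    (-(P.lightSpeed • fourierCurl k (z t).electric)) t
  gauss : fourierDiv k (z t).electric = (4 * π) • ∑ α, P.charge α • (z t).density α
  solenoidal : fourierDiv k (z t).magnetic = 0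

/-- The physical energy. -/
noncomputable def energy (z : FourierState ι) : ℝ :=
  ∑ α, (P.temperature α * Complex.normSq (z.density α) + P.mass α * hsq (z.velocity α))
    + (1 / (4 * π)) * (hsq z.electric + hsq z.magnetic)

/-- The corrector `∑ m_α Re(û_α · conj(i k ρ̂_α))`, whose derivative damps the densities. -/
noncomputable def densityCorrector (k : Fin 3 → ℝ) (z : FourierState ι) : ℝ :=
  ∑ α, P.mass α * hre (z.velocity α) (fourierGrad k (z.density α))

/-- The corrector `∑ (4π m_α q_α / T_α) Re(û_α · conj Ê)`; it enters the Lyapunov functional with a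
minus sign, because its derivative bounds `|Ê|²` from above. -/
noncomputable def electricCorrector (z : FourierState ι) : ℝ :=
  ∑ α, P.dielectricWeight α * hre (z.velocity α) z.electric

/-- The weighted sum of the three correctors. The factor `κ` keeps the electric production of the
magnetic corrector below the electric damping. -/
noncomputable def corrector (κ : ℝ) (k : Fin 3 → ℝ) (z : FourierState ι) : ℝ :=
  (1 + waveSq k)⁻¹ * P.densityCorrector k z - dissipationRate k * P.electricCorrector z
    + κ * ((1 + waveSq k) ^ 2)⁻¹ * z.magneticCorrector k

/-- The Lyapunov functional `ℰ`. -/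
noncomputable def lyapunov (κ₁ κ₂ : ℝ) (k : Fin 3 → ℝ) (z : FourierState ι) : ℝ :=
  P.energy z + κ₁ * P.corrector κ₂ k z

namespace IsSolutionAt

variable {P} {k : Fin 3 → ℝ} {z : ℝ → FourierState ι} {t : ℝ} (h : P.IsSolutionAt k z t)
include h

lemma sum_charge_mul_hre_fourierGrad :
    ∑ α, P.charge α * hre (z t).electric (fourierGrad k ((z t).density α))
      = -(Complex.normSq (fourierDiv k (z t).electric) / (4 * π)) := by
  have hsum : ∑ α, P.charge α * hre (z t).electric (fourierGrad k ((z t).density α))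
      = hre (z t).electric (fourierGrad k (∑ α, P.charge α • (z t).density α)) := by
    simp only [map_sum, LinearMap.map_smul_of_tower, hre_comm (z t).electric, hre_sum_left,
      hre_smul_left]
  have hcharge : ∑ α, P.charge α • (z t).density α
      = (4 * π)⁻¹ • fourierDiv k (z t).electric := by
    rw [h.gauss, inv_smul_smul₀ (by positivity)]
  rw [hsum, hcharge, LinearMap.map_smul_of_tower, hre_comm, hre_smul_left, hre_comm,
    hre_fourierGrad_right, Complex.mul_conj, Complex.ofReal_re]
  ring

lemma hasDerivAt_energy :
    HasDerivAt (fun τ => P.energy (z τ))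
      (-(2 * ∑ α, P.mass α * P.friction α * hsq ((z t).velocity α))) t := by
  have hmatter := HasDerivAt.fun_sum (u := Finset.univ) fun α _ =>
    ((hasDerivAt_normSq (h.continuity α)).const_mul (P.temperature α)).add
      ((hasDerivAt_hsq (h.momentum α)).const_mul (P.mass α))
  have hfield := ((hasDerivAt_hsq h.ampere).add (hasDerivAt_hsq h.faraday)).const_mul (1 / (4 * π))
  refine (hmatter.add hfield).congr_deriv ?_
  have hspecies : ∀ α, P.temperature α
          * (2 * (-fourierDiv k ((z t).velocity α) * conj ((z t).density α)).re)
        + P.mass α * (2 * hre (P.acceleration k (z t) α) ((z t).velocity α))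
      = 2 * (P.charge α * hre ((z t).velocity α) (z t).electric)
        - 2 * (P.mass α * P.friction α * hsq ((z t).velocity α)) := fun α => by
    rw [mul_left_comm (P.mass α), mass_mul_hre_acceleration, neg_mul, Complex.neg_re,
      ← hre_fourierGrad_right, hre_self, hre_comm (fourierGrad _ _), hre_comm (z t).electric]
    ring
  have hmaxwell : 2 * hre (P.lightSpeed • fourierCurl k (z t).magnetic
          - (4 * π) • P.current (z t)) (z t).electric
        + 2 * hre (-(P.lightSpeed • fourierCurl k (z t).electric)) (z t).magnetic
      = -(4 * π) * (2 * hre (P.current (z t)) (z t).electric) := by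
    rw [hre_sub_left, hre_neg_left, hre_smul_left, hre_smul_left, hre_smul_left,
      hre_fourierCurl_left, hre_comm (z t).magnetic]
    ring
  rw [Finset.sum_congr rfl fun α _ => hspecies α, hmaxwell, Finset.sum_sub_distrib,
    ← Finset.mul_sum, ← Finset.mul_sum, current, FourierState.hre_weightedVelocity_left]
  field_simp
  ring

lemma hasDerivAt_densityCorrector :
    HasDerivAt (fun τ => P.densityCorrector k (z τ))
      (∑ α, (P.mass α * Complex.normSq (fourierDiv k ((z t).velocity α))
          - P.temperature α * (waveSq k * Complex.normSq ((z t).density α))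
          - P.mass α * P.friction α * hre ((z t).velocity α) (fourierGrad k ((z t).density α)))
        - Complex.normSq (fourierDiv k (z t).electric) / (4 * π)) t := by
  refine (HasDerivAt.fun_sum (u := Finset.univ) fun α _ =>
    (hasDerivAt_hre (h.momentum α) (hasDerivAt_linearMap_comp (fourierGrad k)
      (h.continuity α))).const_mul (P.mass α)).congr_deriv ?_
  rw [sub_eq_add_neg, ← h.sum_charge_mul_hre_fourierGrad, ← Finset.sum_add_distrib]
  refine Finset.sum_congr rfl fun α _ => ?_
  have hdiv : hre ((z t).velocity α) (fourierGrad k (-fourierDiv k ((z t).velocity α)))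
      = Complex.normSq (fourierDiv k ((z t).velocity α)) := by
    rw [map_neg, hre_neg_right, hre_fourierGrad_right, neg_neg, Complex.mul_conj, Complex.ofReal_re]
  rw [mul_add, mass_mul_hre_acceleration, hdiv, hre_self, hsq_fourierGrad]
  ring

lemma hasDerivAt_electricCorrector :
    HasDerivAt (fun τ => P.electricCorrector (z τ))
      (Complex.normSq (fourierDiv k (z t).electric)
        + (∑ α, 4 * π * P.charge α ^ 2 / P.temperature α) * hsq (z t).electric
        + P.lightSpeed * hre ((z t).weightedVelocity P.dielectricWeight)
            (fourierCurl k (z t).magnetic)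
        - hre ((z t).weightedVelocity fun α => P.dielectricWeight α * P.friction α) (z t).electric
        - 4 * π * hre ((z t).weightedVelocity P.dielectricWeight) (P.current (z t))) t := by
  refine (HasDerivAt.fun_sum (u := Finset.univ) fun α _ =>
    (hasDerivAt_hre (h.momentum α) h.ampere).const_mul (P.dielectricWeight α)).congr_deriv ?_
  have hgauss : Complex.normSq (fourierDiv k (z t).electric) = ∑ α, -(4 * π) * (P.charge α
      * hre (z t).electric (fourierGrad k ((z t).density α))) := by
    rw [← Finset.mul_sum, h.sum_charge_mul_hre_fourierGrad]
    field_simp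
  simp only [hgauss, FourierState.hre_weightedVelocity_left, Finset.sum_mul, Finset.mul_sum,
    ← Finset.sum_add_distrib, ← Finset.sum_sub_distrib]
  refine Finset.sum_congr rfl fun α _ => ?_
  have hweight : P.dielectricWeight α = 4 * π * P.charge α / P.temperature α * P.mass α := by
    unfold dielectricWeight; ring
  have := (P.temperature_pos α).ne'
  rw [mul_add, hweight, mul_assoc, mass_mul_hre_acceleration, hre_self, hre_comm _ (_ - _),
    hre_sub_left, hre_smul_left, hre_smul_left, hre_comm (fourierGrad _ _),
    hre_comm (fourierCurl _ _), hre_comm (P.current _)]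
  field_simp
  ring

lemma hasDerivAt_magneticCorrector :
    HasDerivAt (fun τ => (z τ).magneticCorrector k)
      (P.lightSpeed * hsq (fourierCurl k (z t).electric)
        - P.lightSpeed * (waveSq k * hsq (z t).magnetic)
        + 4 * π * hre (P.current (z t)) (fourierCurl k (z t).magnetic)) t := by
  refine (hasDerivAt_hre h.ampere
    (hasDerivAt_linearMap_comp (fourierCurl k) h.faraday).fun_neg).congr_deriv ?_
  have hcurl : waveSq k * hsq (z t).magnetic = hsq (fourierCurl k (z t).magnetic) := by
    rw [← hsq_fourierCurl_add_normSq_fourierDiv, h.solenoidal, map_zero, add_zero]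
  rw [map_neg, neg_neg, LinearMap.map_smul_of_tower, hre_comm (z t).electric, hre_smul_left,
    hre_fourierCurl_left, hre_self, hre_neg_right, hre_sub_left, hre_smul_left, hre_smul_left,
    hre_self, hcurl]
  ring

lemma hasDerivAt_corrector (κ : ℝ) :
    HasDerivAt (fun τ => P.corrector κ k (z τ))
      ((1 + waveSq k)⁻¹ * deriv (fun τ => P.densityCorrector k (z τ)) t
        - dissipationRate k * deriv (fun τ => P.electricCorrector (z τ)) t
        + κ * ((1 + waveSq k) ^ 2)⁻¹ * deriv (fun τ => (z τ).magneticCorrector k) t) t :=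
  ((h.hasDerivAt_densityCorrector.differentiableAt.hasDerivAt.const_mul _).sub
    (h.hasDerivAt_electricCorrector.differentiableAt.hasDerivAt.const_mul _)).add
    (h.hasDerivAt_magneticCorrector.differentiableAt.hasDerivAt.const_mul _)

lemma hasDerivAt_lyapunov (κ₁ κ₂ : ℝ) :
    HasDerivAt (fun τ => P.lyapunov κ₁ κ₂ k (z τ))
      (deriv (fun τ => P.energy (z τ)) t + κ₁ * deriv (fun τ => P.corrector κ₂ k (z τ)) t) t :=
  h.hasDerivAt_energy.differentiableAt.hasDerivAt.add
    ((h.hasDerivAt_corrector κ₂).differentiableAt.hasDerivAt.const_mul κ₁)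

end IsSolutionAt

section CorrectorEstimates

lemma exists_deriv_energy_le :
    ∃ a > 0, ∀ {k : Fin 3 → ℝ} {z : ℝ → FourierState ι} {t : ℝ}, P.IsSolutionAt k z t →
      deriv (fun τ => P.energy (z τ)) t ≤ -(a * (z t).velocitySq) := by
  obtain ⟨a, ha, hle⟩ :=
    exists_pos_forall_mul_sum_le fun α => mul_pos (P.mass_pos α) (P.friction_pos α)
  refine ⟨a, ha, fun {k z t} h => ?_⟩
  have hfriction := hle _ fun α => hsq_nonneg ((z t).velocity α)
  have hvelocity : 0 ≤ a * (z t).velocitySq := mul_nonneg ha.le (z t).velocitySq_nonneg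
  rw [h.hasDerivAt_energy.deriv]
  simp only [FourierState.velocitySq] at *
  linarith

lemma exists_deriv_densityCorrector_le :
    ∃ b > 0, ∃ C ≥ 0, ∀ {k : Fin 3 → ℝ} {z : ℝ → FourierState ι} {t : ℝ}, P.IsSolutionAt k z t →
      deriv (fun τ => P.densityCorrector k (z τ)) t
        ≤ C * ((1 + waveSq k) * (z t).velocitySq) - b * (waveSq k * (z t).densitySq) := by
  obtain ⟨b, hb, hble⟩ := exists_pos_forall_mul_sum_le fun α => half_pos (P.temperature_pos α)
  let D α := P.mass α + (P.mass α * P.friction α) ^ 2 / (2 * P.temperature α)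
  have hD α : 0 ≤ D α := by
    have := P.mass_pos α
    have := P.temperature_pos α
    positivity
  refine ⟨b, hb, ∑ α, D α, Finset.sum_nonneg fun α _ => hD α, fun {k z t} h => ?_⟩
  have hs := waveSq_nonneg k
  have hdiv : 0 ≤ Complex.normSq (fourierDiv k (z t).electric) / (4 * π) :=
    div_nonneg (Complex.normSq_nonneg _) (by positivity)
  have hvelocity := sum_mul_le_sum_mul_sum hD
    fun α => mul_nonneg (add_nonneg zero_le_one hs) (hsq_nonneg ((z t).velocity α))
  have hdensity := hble _ fun α => mul_nonneg hs (Complex.normSq_nonneg ((z t).density α))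
  have hproduction := Finset.sum_le_sum fun α (_ : α ∈ Finset.univ) =>
    P.density_production_le α k ((z t).density α) ((z t).velocity α)
  have hsplit := Finset.sum_sub_distrib (s := Finset.univ)
    (fun α => D α * ((1 + waveSq k) * hsq ((z t).velocity α)))
    (fun α => P.temperature α / 2 * (waveSq k * Complex.normSq ((z t).density α)))
  rw [← Finset.mul_sum] at hvelocity hdensity
  rw [h.hasDerivAt_densityCorrector.deriv]
  simp only [FourierState.velocitySq, FourierState.densitySq]
  linarith

lemma sum_charge_sq_div_temperature_pos :
    0 < ∑ α, 4 * π * P.charge α ^ 2 / P.temperature α := by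
  obtain ⟨α, hα⟩ := P.exists_charge_ne_zero
  refine Finset.sum_pos' (fun β _ => ?_) ⟨α, Finset.mem_univ α, ?_⟩
  · have := P.temperature_pos β
    positivity
  · have := P.temperature_pos α
    positivity

lemma hre_weightedVelocity_current_le (a : ι → ℝ) (z : FourierState ι) :
    hre (z.weightedVelocity a) (P.current z)
      ≤ (∑ α, a α ^ 2 + ∑ α, P.charge α ^ 2) * z.velocitySq := by
  rw [add_mul]
  exact (le_abs_self _).trans <| (abs_hre_le _ _).trans <|
    add_le_add (z.hsq_weightedVelocity_le a) (z.hsq_weightedVelocity_le P.charge)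

lemma lightSpeed_mul_neg_hre_fourierCurl_magnetic_le (a : ι → ℝ) (k : Fin 3 → ℝ)
    (z : FourierState ι) {η : ℝ} (hη : 0 < η) :
    P.lightSpeed * -hre (z.weightedVelocity a) (fourierCurl k z.magnetic)
      ≤ P.lightSpeed ^ 2 * (∑ α, a α ^ 2) / (4 * η) * (waveSq k * z.velocitySq)
        + η * hsq z.magnetic := by
  have hc := P.lightSpeed_pos
  calc P.lightSpeed * -hre (z.weightedVelocity a) (fourierCurl k z.magnetic)
      ≤ P.lightSpeed * (waveSq k * ((∑ α, a α ^ 2) * z.velocitySq) / (4 * (η / P.lightSpeed))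
        + η / P.lightSpeed * hsq z.magnetic) := by
        gcongr
        exact (neg_le_abs _).trans (z.abs_hre_weightedVelocity_fourierCurl_le a k _ (by positivity))
    _ = _ := by field_simp

lemma exists_neg_deriv_electricCorrector_le :
    ∃ a > 0, ∀ η > 0, ∃ C ≥ 0, ∀ {k : Fin 3 → ℝ} {z : ℝ → FourierState ι} {t : ℝ},
      P.IsSolutionAt k z t → -deriv (fun τ => P.electricCorrector (z τ)) t
        ≤ C * ((1 + waveSq k) * (z t).velocitySq) + η * hsq (z t).magnetic
          - a * hsq (z t).electric := by
  have hA := P.sum_charge_sq_div_temperature_pos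
  set A := ∑ α, 4 * π * P.charge α ^ 2 / P.temperature α with hA_def
  let w := P.dielectricWeight
  let S (a : ι → ℝ) := ∑ α, a α ^ 2
  refine ⟨A / 2, half_pos hA, fun η hη => ?_⟩
  let Cm := P.lightSpeed ^ 2 * S w / (4 * η)
  let Cf := S (fun α => w α * P.friction α) / (2 * A) + 4 * π * (S w + S P.charge)
  have hCm : 0 ≤ Cm := by positivity
  have hCf : 0 ≤ Cf := by positivity
  refine ⟨Cm + Cf, add_nonneg hCm hCf, fun {k z t} h => ?_⟩
  have hs := waveSq_nonneg k
  have hN := (z t).velocitySq_nonneg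
  have hmagnetic := P.lightSpeed_mul_neg_hre_fourierCurl_magnetic_le w k (z t) hη
  have hfriction := (le_abs_self _).trans ((z t).abs_hre_weightedVelocity_le
    (fun α => w α * P.friction α) (z t).electric (half_pos hA))
  have hcurrent := mul_le_mul_of_nonneg_left (P.hre_weightedVelocity_current_le w (z t))
    (by positivity : 0 ≤ 4 * π)
  have hvelocity : S (fun α => w α * P.friction α) * (z t).velocitySq / (4 * (A / 2))
      + 4 * π * ((S w + S P.charge) * (z t).velocitySq) = Cf * (z t).velocitySq := by
    simp only [Cf]
    ring
  have hgauss := Complex.normSq_nonneg (fourierDiv k (z t).electric)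
  have : 0 ≤ Cm * (z t).velocitySq := by positivity
  have : 0 ≤ Cf * (waveSq k * (z t).velocitySq) := by positivity
  rw [h.hasDerivAt_electricCorrector.deriv, ← hA_def]
  linarith

lemma exists_deriv_magneticCorrector_le :
    ∃ b > 0, ∃ K > 0, ∃ C ≥ 0, ∀ {k : Fin 3 → ℝ} {z : ℝ → FourierState ι} {t : ℝ},
      P.IsSolutionAt k z t → deriv (fun τ => (z τ).magneticCorrector k) t
        ≤ C * (z t).velocitySq + K * (waveSq k * hsq (z t).electric)
          - b * (waveSq k * hsq (z t).magnetic) := by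
  have hc := P.lightSpeed_pos
  refine ⟨P.lightSpeed / 2, half_pos hc, P.lightSpeed, hc,
    8 * π ^ 2 / P.lightSpeed * ∑ α, P.charge α ^ 2, by positivity, fun {k z t} h => ?_⟩
  have hcurlE : P.lightSpeed * hsq (fourierCurl k (z t).electric)
      ≤ P.lightSpeed * (waveSq k * hsq (z t).electric) := by
    gcongr
    exact hsq_fourierCurl_le k _
  have hcurrent : 4 * π * hre (P.current (z t)) (fourierCurl k (z t).magnetic)
      ≤ 8 * π ^ 2 / P.lightSpeed * ((∑ α, P.charge α ^ 2) * (z t).velocitySq)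
        + P.lightSpeed / 2 * (waveSq k * hsq (z t).magnetic) := by
    calc 4 * π * hre (P.current (z t)) (fourierCurl k (z t).magnetic)
        ≤ 4 * π * (2 * π / P.lightSpeed * ((∑ α, P.charge α ^ 2) * (z t).velocitySq)
          + waveSq k * hsq (z t).magnetic / (4 * (2 * π / P.lightSpeed))) := by
          gcongr
          refine (hre_le_young _ _ (by positivity : 0 < 2 * π / P.lightSpeed)).trans ?_
          gcongr
          exacts [(z t).hsq_weightedVelocity_le P.charge, hsq_fourierCurl_le k _]
      _ = _ := by
          field_simp
          ring
  rw [h.hasDerivAt_magneticCorrector.deriv]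
  linarith

end CorrectorEstimates

section Equivalence

lemma energy_eq (z : FourierState ι) :
    P.energy z = ∑ α, P.temperature α * Complex.normSq (z.density α)
      + ∑ α, P.mass α * hsq (z.velocity α)
      + 1 / (4 * π) * hsq z.electric + 1 / (4 * π) * hsq z.magnetic := by
  rw [energy, Finset.sum_add_distrib]
  ring

lemma exists_mul_totalSq_le_energy :
    ∃ μ > 0, ∀ z : FourierState ι, μ * z.totalSq ≤ P.energy z := by
  obtain ⟨μT, hμT, hT⟩ := exists_pos_forall_mul_sum_le P.temperature_pos
  obtain ⟨μm, hμm, hm⟩ := exists_pos_forall_mul_sum_le P.mass_pos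
  refine ⟨min (min μT μm) (1 / (4 * π)), by positivity, fun z => ?_⟩
  have hR := z.densitySq_nonneg
  have hN := z.velocitySq_nonneg
  have hX := hsq_nonneg z.electric
  have hY := hsq_nonneg z.magnetic
  calc min (min μT μm) (1 / (4 * π)) * z.totalSq
      ≤ μT * z.densitySq + μm * z.velocitySq + 1 / (4 * π) * hsq z.electric
        + 1 / (4 * π) * hsq z.magnetic := by
        rw [FourierState.totalSq, mul_add, mul_add, mul_add]
        gcongr <;> simp
    _ ≤ P.energy z := by
        rw [P.energy_eq]
        gcongr
        exacts [hT _ fun α => Complex.normSq_nonneg _, hm _ fun α => hsq_nonneg _]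

lemma exists_energy_le_mul_totalSq :
    ∃ M > 0, ∀ z : FourierState ι, P.energy z ≤ M * z.totalSq := by
  have hT0 α := (P.temperature_pos α).le
  have hm0 α := (P.mass_pos α).le
  have hT : 0 ≤ ∑ α, P.temperature α := Finset.sum_nonneg fun α _ => hT0 α
  have hm : 0 ≤ ∑ α, P.mass α := Finset.sum_nonneg fun α _ => hm0 α
  have hπ : 0 < 1 / (4 * π) := by positivity
  refine ⟨∑ α, P.temperature α + ∑ α, P.mass α + 1 / (4 * π), by positivity, fun z => ?_⟩
  have hR := z.densitySq_nonneg
  have hN := z.velocitySq_nonneg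
  have hX := hsq_nonneg z.electric
  have hY := hsq_nonneg z.magnetic
  calc P.energy z
      ≤ (∑ α, P.temperature α) * z.densitySq + (∑ α, P.mass α) * z.velocitySq
        + 1 / (4 * π) * hsq z.electric + 1 / (4 * π) * hsq z.magnetic := by
        rw [P.energy_eq]
        gcongr
        exacts [sum_mul_le_sum_mul_sum hT0 fun α => Complex.normSq_nonneg _,
          sum_mul_le_sum_mul_sum hm0 fun α => hsq_nonneg _]
    _ ≤ (∑ α, P.temperature α + ∑ α, P.mass α + 1 / (4 * π)) * z.totalSq := by
        rw [FourierState.totalSq, mul_add, mul_add, mul_add]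
        gcongr <;> linarith

lemma abs_densityCorrector_le (k : Fin 3 → ℝ) (z : FourierState ι) :
    |P.densityCorrector k z| ≤ (∑ α, P.mass α) * ((1 + waveSq k) * z.totalSq) := by
  have hs := waveSq_nonneg k
  have hm0 α := (P.mass_pos α).le
  have hpairing α : 0 ≤ hsq (z.velocity α) + waveSq k * Complex.normSq (z.density α) :=
    add_nonneg (hsq_nonneg _) (mul_nonneg hs (Complex.normSq_nonneg _))
  calc |P.densityCorrector k z|
      ≤ ∑ α, |P.mass α * hre (z.velocity α) (fourierGrad k (z.density α))| :=
        Finset.abs_sum_le_sum_abs _ _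
    _ ≤ ∑ α, P.mass α * (hsq (z.velocity α) + waveSq k * Complex.normSq (z.density α)) := by
        gcongr with α
        rw [abs_mul, abs_of_nonneg (hm0 α), ← hsq_fourierGrad]
        gcongr
        exacts [hm0 α, abs_hre_le _ _]
    _ ≤ (∑ α, P.mass α) * (z.velocitySq + waveSq k * z.densitySq) := by
        rw [FourierState.velocitySq, FourierState.densitySq, Finset.mul_sum (a := waveSq k),
          ← Finset.sum_add_distrib]
        exact sum_mul_le_sum_mul_sum hm0 hpairing
    _ ≤ (∑ α, P.mass α) * ((1 + waveSq k) * z.totalSq) := by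
        have := z.densitySq_nonneg
        have := z.velocitySq_nonneg
        have := hsq_nonneg z.electric
        have := hsq_nonneg z.magnetic
        gcongr
        · exact Finset.sum_nonneg fun α _ => hm0 α
        · rw [FourierState.totalSq, add_mul, one_mul]
          gcongr <;> linarith

lemma abs_electricCorrector_le (z : FourierState ι) :
    |P.electricCorrector z| ≤ (∑ α, P.dielectricWeight α ^ 2 + 1) * z.totalSq := by
  have hR := z.densitySq_nonneg
  have hN := z.velocitySq_nonneg
  have hX := hsq_nonneg z.electric
  have hY := hsq_nonneg z.magnetic
  rw [electricCorrector, ← FourierState.hre_weightedVelocity_left]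
  refine (abs_hre_le _ _).trans ?_
  rw [add_mul, one_mul]
  gcongr
  · refine (z.hsq_weightedVelocity_le P.dielectricWeight).trans ?_
    gcongr
    rw [FourierState.totalSq]
    linarith
  · rw [FourierState.totalSq]
    linarith

lemma abs_magneticCorrector_le (k : Fin 3 → ℝ) (z : FourierState ι) :
    |z.magneticCorrector k| ≤ (1 + waveSq k) * z.totalSq := by
  have hs := waveSq_nonneg k
  have hR := z.densitySq_nonneg
  have hN := z.velocitySq_nonneg
  have hX := hsq_nonneg z.electric
  have hY := hsq_nonneg z.magnetic
  refine (abs_hre_le _ _).trans ?_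
  rw [hsq_neg, FourierState.totalSq, add_mul, one_mul]
  gcongr
  · linarith
  · refine (hsq_fourierCurl_le k _).trans ?_
    gcongr
    linarith

lemma exists_abs_corrector_le :
    ∃ L > 0, ∀ κ, 0 ≤ κ → κ ≤ 1 → ∀ (k : Fin 3 → ℝ) (z : FourierState ι),
      |P.corrector κ k z| ≤ L * z.totalSq := by
  let Lρ := ∑ α, P.mass α
  let LE := ∑ α, P.dielectricWeight α ^ 2 + 1
  have hLρ : 0 ≤ Lρ := Finset.sum_nonneg fun α _ => (P.mass_pos α).le
  refine ⟨Lρ + LE + 1, by positivity, fun κ hκ hκ1 k z => ?_⟩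
  have hs := waveSq_nonneg k
  have hr := dissipationRate_nonneg k
  have hU := z.totalSq_nonneg
  have hdensity : |(1 + waveSq k)⁻¹ * P.densityCorrector k z| ≤ Lρ * z.totalSq := by
    rw [abs_mul, abs_of_nonneg (by positivity), inv_mul_le_iff₀ (by positivity)]
    exact (P.abs_densityCorrector_le k z).trans_eq (mul_left_comm _ _ _)
  have helectric : |dissipationRate k * P.electricCorrector z| ≤ LE * z.totalSq := by
    rw [abs_mul, abs_of_nonneg hr]
    exact (mul_le_of_le_one_left (abs_nonneg _) (dissipationRate_le_one k)).trans
      (P.abs_electricCorrector_le z)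
  have hmagnetic : |κ * ((1 + waveSq k) ^ 2)⁻¹ * z.magneticCorrector k| ≤ z.totalSq := by
    rw [mul_assoc, abs_mul, abs_of_nonneg hκ]
    refine (mul_le_of_le_one_left (abs_nonneg _) hκ1).trans ?_
    rw [abs_mul, abs_of_nonneg (by positivity), inv_mul_le_iff₀ (by positivity)]
    refine (abs_magneticCorrector_le k z).trans ?_
    gcongr
    nlinarith
  calc |P.corrector κ k z|
      ≤ |(1 + waveSq k)⁻¹ * P.densityCorrector k z| + |dissipationRate k * P.electricCorrector z|
        + |κ * ((1 + waveSq k) ^ 2)⁻¹ * z.magneticCorrector k| :=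
        (abs_add_le _ _).trans (add_le_add_left (abs_sub _ _) _)
    _ ≤ (Lρ + LE + 1) * z.totalSq := by linarith

end Equivalence

section Lyapunov

lemma exists_weighted_deriv_densityCorrector_le :
    ∃ b > 0, ∃ C ≥ 0, ∀ {k : Fin 3 → ℝ} {z : ℝ → FourierState ι} {t : ℝ}, P.IsSolutionAt k z t →
      (1 + waveSq k)⁻¹ * deriv (fun τ => P.densityCorrector k (z τ)) t
        ≤ C * (z t).velocitySq - b * (dissipationRate k * (z t).densitySq) := by
  obtain ⟨b, hb, C, hC, hle⟩ := P.exists_deriv_densityCorrector_le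
  refine ⟨b, hb, C, hC, fun {k z t} h => ?_⟩
  have hs := waveSq_nonneg k
  have hR := (z t).densitySq_nonneg
  calc (1 + waveSq k)⁻¹ * deriv (fun τ => P.densityCorrector k (z τ)) t
      ≤ (1 + waveSq k)⁻¹ * (C * ((1 + waveSq k) * (z t).velocitySq)
        - b * (waveSq k * (z t).densitySq)) := by gcongr; exact hle h
    _ = C * (z t).velocitySq - b * ((1 + waveSq k)⁻¹ * waveSq k * (z t).densitySq) := by field_simp
    _ ≤ C * (z t).velocitySq - b * (dissipationRate k * (z t).densitySq) := by
        gcongr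
        exact dissipationRate_le k

lemma exists_weighted_neg_deriv_electricCorrector_le :
    ∃ a > 0, ∀ η > 0, ∃ C ≥ 0, ∀ {k : Fin 3 → ℝ} {z : ℝ → FourierState ι} {t : ℝ},
      P.IsSolutionAt k z t → dissipationRate k * -deriv (fun τ => P.electricCorrector (z τ)) t
        ≤ C * (z t).velocitySq + η * (dissipationRate k * hsq (z t).magnetic)
          - a * (dissipationRate k * hsq (z t).electric) := by
  obtain ⟨a, ha, hle⟩ := P.exists_neg_deriv_electricCorrector_le
  refine ⟨a, ha, fun η hη => ?_⟩
  obtain ⟨C, hC, hle⟩ := hle η hη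
  refine ⟨C, hC, fun {k z t} h => ?_⟩
  have hr := dissipationRate_nonneg k
  calc dissipationRate k * -deriv (fun τ => P.electricCorrector (z τ)) t
      ≤ dissipationRate k * (C * ((1 + waveSq k) * (z t).velocitySq)
        + η * hsq (z t).magnetic - a * hsq (z t).electric) := by gcongr; exact hle h
    _ = C * (dissipationRate k * (1 + waveSq k) * (z t).velocitySq)
        + η * (dissipationRate k * hsq (z t).magnetic)
        - a * (dissipationRate k * hsq (z t).electric) := by ring
    _ ≤ C * (z t).velocitySq + η * (dissipationRate k * hsq (z t).magnetic)
        - a * (dissipationRate k * hsq (z t).electric) := by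
        gcongr
        exact mul_le_of_le_one_left (z t).velocitySq_nonneg (dissipationRate_mul_le_one k)

lemma exists_weighted_deriv_magneticCorrector_le :
    ∃ b > 0, ∃ K > 0, ∃ C ≥ 0, ∀ {k : Fin 3 → ℝ} {z : ℝ → FourierState ι} {t : ℝ},
      P.IsSolutionAt k z t →
      ((1 + waveSq k) ^ 2)⁻¹ * deriv (fun τ => (z τ).magneticCorrector k) t
        ≤ C * (z t).velocitySq + K * (dissipationRate k * hsq (z t).electric)
          - b * (dissipationRate k * hsq (z t).magnetic) := by
  obtain ⟨b, hb, K, hK, C, hC, hle⟩ := P.exists_deriv_magneticCorrector_le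
  refine ⟨b, hb, K, hK, C, hC, fun {k z t} h => ?_⟩
  have hs := waveSq_nonneg k
  calc ((1 + waveSq k) ^ 2)⁻¹ * deriv (fun τ => (z τ).magneticCorrector k) t
      ≤ ((1 + waveSq k) ^ 2)⁻¹ * (C * (z t).velocitySq
        + K * (waveSq k * hsq (z t).electric) - b * (waveSq k * hsq (z t).magnetic)) := by
        gcongr
        exact hle h
    _ = C * (((1 + waveSq k) ^ 2)⁻¹ * (z t).velocitySq)
        + K * (dissipationRate k * hsq (z t).electric)
        - b * (dissipationRate k * hsq (z t).magnetic) := by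
        rw [dissipationRate, div_eq_inv_mul]
        ring
    _ ≤ C * (z t).velocitySq + K * (dissipationRate k * hsq (z t).electric)
        - b * (dissipationRate k * hsq (z t).magnetic) := by
        gcongr
        exact mul_le_of_le_one_left (z t).velocitySq_nonneg
          (inv_le_one_of_one_le₀ (one_le_pow₀ (by linarith)))

lemma exists_deriv_corrector_le :
    ∃ κ, 0 < κ ∧ κ < 1 ∧ ∃ b > 0, ∃ C ≥ 0,
      ∀ {k : Fin 3 → ℝ} {z : ℝ → FourierState ι} {t : ℝ}, P.IsSolutionAt k z t →
        deriv (fun τ => P.corrector κ k (z τ)) t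
          ≤ C * (z t).velocitySq - b * (dissipationRate k
            * ((z t).densitySq + hsq (z t).electric + hsq (z t).magnetic)) := by
  obtain ⟨bρ, hbρ, Cρ, hCρ, hdensity⟩ := P.exists_weighted_deriv_densityCorrector_le
  obtain ⟨bB, hbB, K, hK, CB, hCB, hmagnetic⟩ := P.exists_weighted_deriv_magneticCorrector_le
  obtain ⟨a, ha, helectric⟩ := P.exists_weighted_neg_deriv_electricCorrector_le
  let κ := min (1 / 2) (a / (2 * K))
  have hκ : 0 < κ := by positivity
  have hκ1 : κ ≤ 1 / 2 := min_le_left _ _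
  have hκK : κ * K ≤ a / 2 := by
    calc κ * K ≤ a / (2 * K) * K := by gcongr; exact min_le_right _ _
      _ = a / 2 := by field_simp
  obtain ⟨CE, hCE, helectric⟩ := helectric (κ * bB / 2) (by positivity)
  refine ⟨κ, hκ, by linarith, min bρ (min (a / 2) (κ * bB / 2)), by positivity,
    Cρ + CE + κ * CB, by positivity, fun {k z t} h => ?_⟩
  have hr := dissipationRate_nonneg k
  have hR := (z t).densitySq_nonneg
  have hX := hsq_nonneg (z t).electric
  have hY := hsq_nonneg (z t).magnetic
  have hmagnetic := mul_le_mul_of_nonneg_left (hmagnetic h) hκ.le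
  have hproduction := mul_le_mul_of_nonneg_right hκK (mul_nonneg hr hX)
  have hdamping : min bρ (min (a / 2) (κ * bB / 2)) * (dissipationRate k
        * ((z t).densitySq + hsq (z t).electric + hsq (z t).magnetic))
      ≤ bρ * (dissipationRate k * (z t).densitySq)
        + a / 2 * (dissipationRate k * hsq (z t).electric)
        + κ * bB / 2 * (dissipationRate k * hsq (z t).magnetic) := by
    rw [mul_add (dissipationRate k), mul_add (dissipationRate k), mul_add, mul_add]
    gcongr <;> simp
  rw [(h.hasDerivAt_corrector κ).deriv]
  linarith [hdensity h, helectric h]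

lemma exists_deriv_lyapunov_le :
    ∃ κ₂, 0 < κ₂ ∧ κ₂ < 1 ∧ ∃ δ > 0, ∀ κ₁, 0 < κ₁ → κ₁ ≤ δ → ∃ b > 0,
      ∀ {k : Fin 3 → ℝ} {z : ℝ → FourierState ι} {t : ℝ}, P.IsSolutionAt k z t →
        deriv (fun τ => P.lyapunov κ₁ κ₂ k (z τ)) t
          ≤ -(b * (dissipationRate k * (z t).totalSq)) := by
  obtain ⟨a, ha, henergy⟩ := P.exists_deriv_energy_le
  obtain ⟨κ₂, hκ₂, hκ₂1, b, hb, C, hC, hcorrector⟩ := P.exists_deriv_corrector_le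
  refine ⟨κ₂, hκ₂, hκ₂1, a / (2 * (C + 1)), by positivity, fun κ₁ hκ₁ hκ₁δ => ?_⟩
  refine ⟨min (a / 2) (κ₁ * b), by positivity, fun {k z t} h => ?_⟩
  have hN := (z t).velocitySq_nonneg
  have hD : 0 ≤ (z t).densitySq + hsq (z t).electric + hsq (z t).magnetic :=
    add_nonneg (add_nonneg (z t).densitySq_nonneg (hsq_nonneg _)) (hsq_nonneg _)
  have hr := dissipationRate_nonneg k
  have hκ₁C : κ₁ * C ≤ a / 2 := by
    rw [le_div_iff₀ (by positivity)] at hκ₁δ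
    nlinarith
  have hvelocity := mul_le_mul_of_nonneg_right hκ₁C hN
  have hdamping := mul_le_mul_of_nonneg_left (hcorrector h) hκ₁.le
  have hrate : min (a / 2) (κ₁ * b) * (dissipationRate k * (z t).totalSq)
      ≤ a / 2 * (z t).velocitySq + κ₁ * b * (dissipationRate k
        * ((z t).densitySq + hsq (z t).electric + hsq (z t).magnetic)) := by
    calc _ = min (a / 2) (κ₁ * b) * (dissipationRate k * (z t).velocitySq)
          + min (a / 2) (κ₁ * b) * (dissipationRate k
            * ((z t).densitySq + hsq (z t).electric + hsq (z t).magnetic)) := by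
          rw [FourierState.totalSq]; ring
      _ ≤ _ := by
          gcongr
          exacts [min_le_left _ _, mul_le_of_le_one_left hN (dissipationRate_le_one k),
            min_le_right _ _]
  rw [(h.hasDerivAt_lyapunov κ₁ κ₂).deriv]
  linarith [henergy h]

lemma exists_lyapunov_bounds :
    ∃ δ > 0, ∃ c₀ > 0, ∃ C₀ > 0, ∀ κ₁ κ₂, 0 ≤ κ₁ → κ₁ ≤ δ → 0 ≤ κ₂ → κ₂ ≤ 1 →
      ∀ (k : Fin 3 → ℝ) (z : FourierState ι), c₀ * z.totalSq ≤ P.lyapunov κ₁ κ₂ k z ∧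
        P.lyapunov κ₁ κ₂ k z ≤ C₀ * z.totalSq := by
  obtain ⟨μ, hμ, hlower⟩ := P.exists_mul_totalSq_le_energy
  obtain ⟨M, hM, hupper⟩ := P.exists_energy_le_mul_totalSq
  obtain ⟨L, hL, hcorrector⟩ := P.exists_abs_corrector_le
  refine ⟨μ / (2 * L), by positivity, μ / 2, by positivity, M + μ / 2, by positivity,
    fun κ₁ κ₂ hκ₁ hκ₁δ hκ₂ hκ₂1 k z => ?_⟩
  have hsmall : |κ₁ * P.corrector κ₂ k z| ≤ μ / 2 * z.totalSq := by
    calc |κ₁ * P.corrector κ₂ k z|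
        = κ₁ * |P.corrector κ₂ k z| := by rw [abs_mul, abs_of_nonneg hκ₁]
      _ ≤ μ / (2 * L) * (L * z.totalSq) := by
          gcongr
          exact hcorrector κ₂ hκ₂ hκ₂1 k z
      _ = μ / 2 * z.totalSq := by field_simp
  obtain ⟨hneg, hpos⟩ := abs_le.1 hsmall
  rw [lyapunov]
  constructor <;> linarith [hlower z, hupper z]

end Lyapunov

section TwoFluid

variable {mi me νi νe Ti Te e c : ℝ}

/-- The two-fluid plasma of ions (index `0`) and electrons (index `1`), with charges `e`, `-e`. -/
def twoFluid (hmi : 0 < mi) (hme : 0 < me) (hνi : 0 < νi) (hνe : 0 < νe)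
    (hTi : 0 < Ti) (hTe : 0 < Te) (he : 0 < e) (hc : 0 < c) : EulerMaxwell (Fin 2) where
  mass := ![mi, me]
  temperature := ![Ti, Te]
  friction := ![νi, νe]
  charge := ![e, -e]
  lightSpeed := c
  mass_pos := Fin.forall_fin_two.2 ⟨hmi, hme⟩
  temperature_pos := Fin.forall_fin_two.2 ⟨hTi, hTe⟩
  friction_pos := Fin.forall_fin_two.2 ⟨hνi, hνe⟩
  exists_charge_ne_zero := ⟨0, he.ne'⟩
  lightSpeed_pos := hc

variable (hmi : 0 < mi) (hme : 0 < me) (hνi : 0 < νi) (hνe : 0 < νe)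
  (hTi : 0 < Ti) (hTe : 0 < Te) (he : 0 < e) (hc : 0 < c)

/-- The two-species state with ion data `ρi`, `ui` and electron data `ρe`, `ue`. -/
def twoFluidState (ρi ρe : ℂ) (ui ue E B : Fin 3 → ℂ) : FourierState (Fin 2) :=
  ⟨![ρi, ρe], ![ui, ue], E, B⟩

lemma totalSq_twoFluidState (ρi ρe : ℂ) (ui ue E B : Fin 3 → ℂ) :
    (twoFluidState ρi ρe ui ue E B).totalSq = Complex.normSq ρi + Complex.normSq ρe
      + hsq ui + hsq ue + hsq E + hsq B := by
  simp only [FourierState.totalSq, FourierState.densitySq, FourierState.velocitySq, twoFluidState,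
    Fin.sum_univ_two, Matrix.cons_val_zero, Matrix.cons_val_one]
  ring

lemma lyapunov_twoFluidState (κ₁ κ₂ : ℝ) (k : Fin 3 → ℝ) (ρi ρe : ℂ) (ui ue E B : Fin 3 → ℂ) :
    (twoFluid hmi hme hνi hνe hTi hTe he hc).lyapunov κ₁ κ₂ k (twoFluidState ρi ρe ui ue E B)
      = (Ti * Complex.normSq ρi + Te * Complex.normSq ρe + mi * hsq ui + me * hsq ue)
        + (1 / (4 * π)) * (hsq E + hsq B)
        + κ₁ * (1 + waveSq k)⁻¹ *
            (mi * hre ui (fun j => Complex.I * (k j : ℂ) * ρi)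
              + me * hre ue (fun j => Complex.I * (k j : ℂ) * ρe))
        - κ₁ * ((1 + waveSq k) ^ 2)⁻¹ * waveSq k *
            ((4 * π * mi * e / Ti) * hre ui E + (4 * π * me * (-e) / Te) * hre ue E)
        + κ₁ * κ₂ * ((1 + waveSq k) ^ 2)⁻¹ * hre E (fun j => -(cross3 (ikv k) B j)) := by
  have hgrad (ρ : ℂ) : fourierGrad k ρ = fun j => Complex.I * (k j : ℂ) * ρ :=
    funext (fourierGrad_apply k ρ)
  have hcurl : -fourierCurl k B = fun j => -(cross3 (ikv k) B j) := rfl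
  simp only [lyapunov, energy, corrector, densityCorrector, electricCorrector,
    FourierState.magneticCorrector, dielectricWeight, dissipationRate, twoFluid, twoFluidState,
    Fin.sum_univ_two, Matrix.cons_val_zero, Matrix.cons_val_one, ← hgrad, ← hcurl]
  ring

variable {k : Fin 3 → ℝ} {ρi ρe : ℝ → ℂ} {ui ue E B : ℝ → Fin 3 → ℂ} {t : ℝ}

lemma isSolutionAt_twoFluidState
    (hρi : DifferentiableAt ℝ ρi t) (hρe : DifferentiableAt ℝ ρe t)
    (hui : DifferentiableAt ℝ ui t) (hue : DifferentiableAt ℝ ue t)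
    (hE : DifferentiableAt ℝ E t) (hB : DifferentiableAt ℝ B t)
    (hcontinuityi : deriv ρi t + Complex.I * ∑ j, (k j : ℂ) * ui t j = 0)
    (hcontinuitye : deriv ρe t + Complex.I * ∑ j, (k j : ℂ) * ue t j = 0)
    (hmomentumi : ∀ j, (mi : ℂ) * deriv ui t j + (Ti : ℂ) * (Complex.I * (k j : ℂ)) * ρi t
      - (e : ℂ) * E t j + (mi : ℂ) * (νi : ℂ) * ui t j = 0)
    (hmomentume : ∀ j, (me : ℂ) * deriv ue t j + (Te : ℂ) * (Complex.I * (k j : ℂ)) * ρe t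
      + (e : ℂ) * E t j + (me : ℂ) * (νe : ℂ) * ue t j = 0)
    (hampere : ∀ j, deriv E t j - (c : ℂ) * cross3 (ikv k) (B t) j
      + 4 * (π : ℂ) * ((e : ℂ) * ui t j - (e : ℂ) * ue t j) = 0)
    (hfaraday : ∀ j, deriv B t j + (c : ℂ) * cross3 (ikv k) (E t) j = 0)
    (hgauss : Complex.I * ∑ j, (k j : ℂ) * E t j
      = 4 * (π : ℂ) * ((e : ℂ) * ρi t - (e : ℂ) * ρe t))
    (hsolenoidal : Complex.I * ∑ j, (k j : ℂ) * B t j = 0) :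
    (twoFluid hmi hme hνi hνe hTi hTe he hc).IsSolutionAt k
      (fun τ => twoFluidState (ρi τ) (ρe τ) (ui τ) (ue τ) (E τ) (B τ)) t where
  continuity := by
    refine Fin.forall_fin_two.2 ⟨hρi.hasDerivAt.congr_deriv ?_, hρe.hasDerivAt.congr_deriv ?_⟩
    · rw [fourierDiv_apply]
      exact eq_neg_of_add_eq_zero_left hcontinuityi
    · rw [fourierDiv_apply]
      exact eq_neg_of_add_eq_zero_left hcontinuitye
  momentum := by
    have hmi' : (mi : ℂ) ≠ 0 := Complex.ofReal_ne_zero.2 hmi.ne'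
    have hme' : (me : ℂ) ≠ 0 := Complex.ofReal_ne_zero.2 hme.ne'
    refine Fin.forall_fin_two.2 ⟨hui.hasDerivAt.congr_deriv (funext fun j => ?_),
      hue.hasDerivAt.congr_deriv (funext fun j => ?_)⟩
    · simp only [acceleration, twoFluid, twoFluidState, Matrix.cons_val_zero, Pi.sub_apply,
        Pi.smul_apply, Complex.real_smul, fourierGrad_apply, Complex.ofReal_inv]
      field_simp
      linear_combination hmomentumi j
    · simp only [acceleration, twoFluid, twoFluidState, Matrix.cons_val_one,
        Matrix.cons_val_fin_one, Pi.sub_apply, Pi.smul_apply, Complex.real_smul, fourierGrad_apply,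
        Complex.ofReal_inv, Complex.ofReal_neg]
      field_simp
      linear_combination hmomentume j
  ampere := hE.hasDerivAt.congr_deriv <| funext fun j => by
    simp only [current, FourierState.weightedVelocity, twoFluid, twoFluidState, fourierCurl_apply,
      Fin.sum_univ_two, Matrix.cons_val_zero, Matrix.cons_val_one, Matrix.cons_val_fin_one,
      Pi.sub_apply, Pi.add_apply, Pi.smul_apply, Complex.real_smul, Complex.ofReal_mul,
      Complex.ofReal_neg, Complex.ofReal_ofNat]
    linear_combination hampere j
  faraday := hB.hasDerivAt.congr_deriv <| funext fun j => by
    simp only [twoFluid, twoFluidState, fourierCurl_apply, Pi.neg_apply, Pi.smul_apply,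
      Complex.real_smul]
    linear_combination hfaraday j
  gauss := by
    simp only [fourierDiv_apply, twoFluid, twoFluidState, hgauss, Fin.sum_univ_two,
      Matrix.cons_val_zero, Matrix.cons_val_one, Matrix.cons_val_fin_one, Complex.real_smul,
      Complex.ofReal_mul, Complex.ofReal_neg, Complex.ofReal_ofNat]
    ring
  solenoidal := by
    rwa [fourierDiv_apply]

end TwoFluid

end EulerMaxwell

theorem stmt_11_general {ι : Type*} [Fintype ι] (P : EulerMaxwell ι) :
    ∃ κ₁ κ₂ lam c₀ C₀ : ℝ,
      0 < κ₁ ∧ κ₁ < 1 ∧ 0 < κ₂ ∧ κ₂ < 1 ∧ 0 < lam ∧ 0 < c₀ ∧ 0 < C₀ ∧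
      ∀ k : Fin 3 → ℝ,
        (∀ z : FourierState ι, c₀ * z.totalSq ≤ P.lyapunov κ₁ κ₂ k z ∧
          P.lyapunov κ₁ κ₂ k z ≤ C₀ * z.totalSq) ∧
        ∀ (z : ℝ → FourierState ι) (t : ℝ), P.IsSolutionAt k z t →
          ∃ d, HasDerivAt (fun τ => P.lyapunov κ₁ κ₂ k (z τ)) d t ∧
            d + lam * dissipationRate k * P.lyapunov κ₁ κ₂ k (z t) ≤ 0 := by
  obtain ⟨κ₂, hκ₂, hκ₂1, δ₁, hδ₁, hdecay⟩ := P.exists_deriv_lyapunov_le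
  obtain ⟨δ₂, hδ₂, c₀, hc₀, C₀, hC₀, hbounds⟩ := P.exists_lyapunov_bounds
  let κ₁ := min (1 / 2) (min δ₁ δ₂)
  have hκ₁ : 0 < κ₁ := by positivity
  have hκ₁1 : κ₁ ≤ 1 / 2 := min_le_left _ _
  have hκ₁δ₁ : κ₁ ≤ δ₁ := (min_le_right _ _).trans (min_le_left _ _)
  have hκ₁δ₂ : κ₁ ≤ δ₂ := (min_le_right _ _).trans (min_le_right _ _)
  obtain ⟨b, hb, hdecay⟩ := hdecay κ₁ hκ₁ hκ₁δ₁
  have hequiv := hbounds κ₁ κ₂ hκ₁.le hκ₁δ₂ hκ₂.le hκ₂1.le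
  refine ⟨κ₁, κ₂, b / C₀, c₀, C₀, hκ₁, by linarith, hκ₂, hκ₂1, by positivity, hc₀, hC₀,
    fun k => ⟨hequiv k, fun z t h =>
      ⟨_, (h.hasDerivAt_lyapunov κ₁ κ₂).differentiableAt.hasDerivAt, ?_⟩⟩⟩
  have hr := dissipationRate_nonneg k
  have hrate : b / C₀ * dissipationRate k * P.lyapunov κ₁ κ₂ k (z t)
      ≤ b * (dissipationRate k * (z t).totalSq) := by
    calc _ ≤ b / C₀ * dissipationRate k * (C₀ * (z t).totalSq) := by
          gcongr; exact (hequiv k (z t)).2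
      _ = b * (dissipationRate k * (z t).totalSq) := by field_simp
  linarith [hdecay h]

/-- Existence of a time-frequency Lyapunov functional, equivalent to `|Û|²` and
satisfying the Lyapunov differential inequality with dissipation rate
`λ|k|²/(1+|k|²)²`, for the Fourier-transformed linearized two-fluid
Euler–Maxwell system. -/
theorem stmt_11 (mi me νi νe Ti Te e c : ℝ)
    (hmi : 0 < mi) (hme : 0 < me) (hνi : 0 < νi) (hνe : 0 < νe)
    (hTi : 0 < Ti) (hTe : 0 < Te) (he : 0 < e) (hc : 0 < c) :
    ∃ κ₁ κ₂ lam c₀ C₀ : ℝ,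
      0 < κ₁ ∧ κ₁ < 1 ∧ 0 < κ₂ ∧ κ₂ < 1 ∧ 0 < lam ∧ 0 < c₀ ∧ 0 < C₀ ∧
      ∀ (k : Fin 3 → ℝ) (ρi ρe : ℝ → ℂ) (ui ue E B : ℝ → Fin 3 → ℂ),
        Differentiable ℝ ρi → Differentiable ℝ ρe →
        Differentiable ℝ ui → Differentiable ℝ ue →
        Differentiable ℝ E → Differentiable ℝ B →
        (∀ t : ℝ, deriv ρi t + Complex.I * ∑ j, (k j : ℂ) * ui t j = 0) →
        (∀ t : ℝ, deriv ρe t + Complex.I * ∑ j, (k j : ℂ) * ue t j = 0) →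
        (∀ (t : ℝ) (j : Fin 3), (mi : ℂ) * deriv ui t j
          + (Ti : ℂ) * (Complex.I * (k j : ℂ)) * ρi t
          - (e : ℂ) * E t j + (mi : ℂ) * (νi : ℂ) * ui t j = 0) →
        (∀ (t : ℝ) (j : Fin 3), (me : ℂ) * deriv ue t j
          + (Te : ℂ) * (Complex.I * (k j : ℂ)) * ρe t
          + (e : ℂ) * E t j + (me : ℂ) * (νe : ℂ) * ue t j = 0) →
        (∀ (t : ℝ) (j : Fin 3), deriv E t j - (c : ℂ) * cross3 (ikv k) (B t) j
          + 4 * (π : ℂ) * ((e : ℂ) * ui t j - (e : ℂ) * ue t j) = 0) →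
        (∀ (t : ℝ) (j : Fin 3), deriv B t j + (c : ℂ) * cross3 (ikv k) (E t) j = 0) →
        (∀ t : ℝ, Complex.I * ∑ j, (k j : ℂ) * E t j
          = 4 * (π : ℂ) * ((e : ℂ) * ρi t - (e : ℂ) * ρe t)) →
        (∀ t : ℝ, Complex.I * ∑ j, (k j : ℂ) * B t j = 0) →
        (let ksq : ℝ := ∑ j, (k j) ^ 2
         let En : ℝ → ℝ := fun t =>
           (Ti * Complex.normSq (ρi t) + Te * Complex.normSq (ρe t)
              + mi * hsq (ui t) + me * hsq (ue t))
           + (1 / (4 * π)) * (hsq (E t) + hsq (B t))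
           + κ₁ * (1 + ksq)⁻¹ *
               (mi * hre (ui t) (fun j => Complex.I * (k j : ℂ) * ρi t)
                 + me * hre (ue t) (fun j => Complex.I * (k j : ℂ) * ρe t))
           - κ₁ * ((1 + ksq) ^ 2)⁻¹ * ksq *
               ((4 * π * mi * e / Ti) * hre (ui t) (E t)
                 + (4 * π * me * (-e) / Te) * hre (ue t) (E t))
           + κ₁ * κ₂ * ((1 + ksq) ^ 2)⁻¹ *
               hre (E t) (fun j => -(cross3 (ikv k) (B t) j))
         let Usq : ℝ → ℝ := fun t =>
           Complex.normSq (ρi t) + Complex.normSq (ρe t)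
             + hsq (ui t) + hsq (ue t) + hsq (E t) + hsq (B t)
         (∀ t : ℝ, 0 ≤ t → c₀ * Usq t ≤ En t ∧ En t ≤ C₀ * Usq t) ∧
           ∀ t : ℝ, 0 < t → ∃ d : ℝ, HasDerivAt En d t ∧
             d + lam * ksq / (1 + ksq) ^ 2 * En t ≤ 0) := by
  obtain ⟨κ₁, κ₂, lam, c₀, C₀, hκ₁, hκ₁1, hκ₂, hκ₂1, hlam, hc₀, hC₀, hlyapunov⟩ :=
    stmt_11_general (EulerMaxwell.twoFluid hmi hme hνi hνe hTi hTe he hc)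
  refine ⟨κ₁, κ₂, lam, c₀, C₀, hκ₁, hκ₁1, hκ₂, hκ₂1, hlam, hc₀, hC₀, ?_⟩
  intro k ρi ρe ui ue E B hρi hρe hui hue hE hB hcontinuityi hcontinuitye hmomentumi hmomentume
    hampere hfaraday hgauss hsolenoidal ksq En Usq
  obtain ⟨hbounds, hdecay⟩ := hlyapunov k
  refine ⟨fun t _ => ?_, fun t _ => ?_⟩
  · have hstate := hbounds (EulerMaxwell.twoFluidState (ρi t) (ρe t) (ui t) (ue t) (E t) (B t))
    simp only [EulerMaxwell.totalSq_twoFluidState, EulerMaxwell.lyapunov_twoFluidState] at hstate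
    exact hstate
  · have hderiv := hdecay _ t <| EulerMaxwell.isSolutionAt_twoFluidState
      hmi hme hνi hνe hTi hTe he hc (hρi t) (hρe t) (hui t) (hue t) (hE t) (hB t)
      (hcontinuityi t) (hcontinuitye t) (hmomentumi t) (hmomentume t) (hampere t) (hfaraday t)
      (hgauss t) (hsolenoidal t)
    simp only [EulerMaxwell.lyapunov_twoFluidState, dissipationRate, ← mul_div_assoc] at hderiv
    exact hderiv
end

section
/- Let m_i, m_e, ν_i, ν_e, T_i, T_e, e, c > 0 with q_i = e, q_e = −e, and fix k ∈ ℝ³. There exist constants λ, C > 0, depending only on the physical constants (not on k), such that along every solution (ρ̂_i, ρ̂_e, û_i, û_e, Ê, B̂) of the Fourier-transformed linearized two-fluid Euler–Maxwell system at frequency k, for all t > 0: d/dt [ (1+|k|²)^{-1} Σ_{α=i,e} m_α Re( û_α(t)·conj(i k ρ̂_α(t)) ) ] + λ (|k|²/(1+|k|²)) Σ_{α=i,e} |ρ̂_α(t)|² + (4π/(1+|k|²)) |e ρ̂_i(t) − e ρ̂_e(t)|² ≤ C Σ_{α=i,e} |û_α(t)|². -/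
open Real Complex ComplexConjugate

/-!
Write `κ = ik`. The continuity equation reads `∂ₜρ = ⟪κ, u⟫`, and `m ∂ₜu` is the sum of the
electric force `q E`, the pressure force `-T ρ κ` and the friction `-m ν u`. Hence the derivative of
`m Re ⟪ρ κ, u⟫` is the sum of `m |⟪κ, u⟫|² ≤ m |κ|² |u|²`, the dissipation `-T |κ|² |ρ|²`, a
friction term, and the work `q Re ⟪ρ κ, E⟫`. Half of the dissipation absorbs the density part of the
friction term by Young's inequality. By Gauss's law the work summed over the species is exactly
`-4π |∑ q ρ|²`. The weight `(1 + |κ|²)⁻¹` makes the coefficient `m |κ|²` bounded uniformly in `κ`.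
-/

open Filter
open scoped InnerProductSpace Topology

lemma mul_re_inner_le {𝕜 F : Type*} [RCLike 𝕜] [NormedAddCommGroup F] [InnerProductSpace 𝕜 F]
    (x y : F) (a : ℝ) {T : ℝ} (hT : 0 < T) :
    a * RCLike.re ⟪x, y⟫_𝕜 ≤ T / 2 * ‖x‖ ^ 2 + a ^ 2 / (2 * T) * ‖y‖ ^ 2 := by
  have hsquare : 0 ≤ (T * ‖x‖ - |a| * ‖y‖) ^ 2 / (2 * T) := by positivity
  calc a * RCLike.re ⟪x, y⟫_𝕜 ≤ |a| * |RCLike.re ⟪x, y⟫_𝕜| :=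
        (le_abs_self _).trans_eq (abs_mul _ _)
    _ ≤ |a| * (‖x‖ * ‖y‖) := by
      gcongr
      exact (RCLike.abs_re_le_norm _).trans (norm_inner_le_norm x y)
    _ ≤ |a| * (‖x‖ * ‖y‖) + (T * ‖x‖ - |a| * ‖y‖) ^ 2 / (2 * T) := le_add_of_nonneg_right hsquare
    _ = T / 2 * ‖x‖ ^ 2 + a ^ 2 / (2 * T) * ‖y‖ ^ 2 := by
      rw [← sq_abs a]
      field_simp
      ring

section InnerProductSpace

variable {H : Type*} [NormedAddCommGroup H] [InnerProductSpace ℂ H]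

/-- The linearized continuity and momentum equations at time `t` of a fluid species with mass `m`,
collision frequency `ν`, temperature `T` and charge `q`, for one Fourier mode. The vector `κ` stands
for `ik`, so that `⟪κ, u⟫ = -ik · u`. -/
structure IsFluidModeAt (m ν T q : ℝ) (κ : H) (ρ : ℝ → ℂ) (u : ℝ → H) (E : H) (t : ℝ) : Prop where
  continuity : HasDerivAt ρ ⟪κ, u t⟫_ℂ t
  momentum : HasDerivAt (fun s ↦ (m : ℂ) • u s)
    ((q : ℂ) • E - (T : ℂ) • ρ t • κ - ((m * ν : ℝ) : ℂ) • u t) t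

namespace IsFluidModeAt

variable {m ν T q t : ℝ} {κ E : H} {ρ : ℝ → ℂ} {u : ℝ → H}

lemma hasDerivAt_re_inner (h : IsFluidModeAt m ν T q κ ρ u E t) :
    HasDerivAt (fun s ↦ m * (⟪ρ s • κ, u s⟫_ℂ).re)
      (m * ‖⟪κ, u t⟫_ℂ‖ ^ 2 + q * (⟪ρ t • κ, E⟫_ℂ).re - T * ‖ρ t • κ‖ ^ 2
        - m * ν * (⟪ρ t • κ, u t⟫_ℂ).re) t := by
  have hcompression : (⟪⟪κ, u t⟫_ℂ • κ, (m : ℂ) • u t⟫_ℂ).re = m * ‖⟪κ, u t⟫_ℂ‖ ^ 2 := by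
    rw [inner_smul_right, inner_smul_left, Complex.conj_mul', ← Complex.ofReal_pow,
      Complex.re_ofReal_mul, Complex.ofReal_re]
  have hforce (x : H) : (⟪x, (q : ℂ) • E - (T : ℂ) • x - ((m * ν : ℝ) : ℂ) • u t⟫_ℂ).re
      = q * (⟪x, E⟫_ℂ).re - T * ‖x‖ ^ 2 - m * ν * (⟪x, u t⟫_ℂ).re := by
    simp only [inner_sub_right, inner_smul_right, Complex.sub_re, Complex.re_ofReal_mul]
    rw [← RCLike.re_eq_complex_re, inner_self_eq_norm_sq]
  have hmass (s : ℝ) : m * (⟪ρ s • κ, u s⟫_ℂ).re = (⟪ρ s • κ, (m : ℂ) • u s⟫_ℂ).re := by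
    rw [inner_smul_right, Complex.re_ofReal_mul]
  simp only [hmass]
  refine (Complex.reCLM.hasFDerivAt.comp_hasDerivAt t
    ((h.continuity.smul_const κ).inner ℂ h.momentum)).congr_deriv ?_
  rw [Complex.reCLM_apply, Complex.add_re, hcompression, hforce]
  ring

lemma density_dissipation (h : IsFluidModeAt m ν T q κ ρ u E t) (hm : 0 ≤ m) (hT : 0 < T) :
    ∃ d, HasDerivAt (fun s ↦ m * (⟪ρ s • κ, u s⟫_ℂ).re) d t ∧
      d + T / 2 * ‖κ‖ ^ 2 * ‖ρ t‖ ^ 2 ≤ q * (⟪ρ t • κ, E⟫_ℂ).re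
        + (m * ‖κ‖ ^ 2 + (m * ν) ^ 2 / (2 * T)) * ‖u t‖ ^ 2 := by
  refine ⟨_, h.hasDerivAt_re_inner, ?_⟩
  have hcompression : m * ‖⟪κ, u t⟫_ℂ‖ ^ 2 ≤ m * (‖κ‖ * ‖u t‖) ^ 2 := by
    gcongr
    exact norm_inner_le_norm κ (u t)
  have hfriction := mul_re_inner_le (𝕜 := ℂ) (ρ t • κ) (u t) (-(m * ν)) hT
  rw [RCLike.re_eq_complex_re, norm_smul, neg_sq] at hfriction
  rw [norm_smul]
  linarith

lemma density_dissipation_uniform {lam C : ℝ} (h : IsFluidModeAt m ν T q κ ρ u E t) (hm : 0 ≤ m)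
    (hT : 0 < T) (hlam : lam ≤ T / 2) (hC : m + (m * ν) ^ 2 / (2 * T) ≤ C) :
    ∃ d, HasDerivAt (fun s ↦ m * (⟪ρ s • κ, u s⟫_ℂ).re) d t ∧
      d + lam * ‖κ‖ ^ 2 * ‖ρ t‖ ^ 2
        ≤ q * (⟪ρ t • κ, E⟫_ℂ).re + (1 + ‖κ‖ ^ 2) * C * ‖u t‖ ^ 2 := by
  obtain ⟨d, hd, hle⟩ := h.density_dissipation hm hT
  have hcoeff : m * ‖κ‖ ^ 2 + (m * ν) ^ 2 / (2 * T) ≤ (1 + ‖κ‖ ^ 2) * C := by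
    have hfriction : 0 ≤ (m * ν) ^ 2 / (2 * T) := by positivity
    calc m * ‖κ‖ ^ 2 + (m * ν) ^ 2 / (2 * T)
        ≤ (1 + ‖κ‖ ^ 2) * (m + (m * ν) ^ 2 / (2 * T)) := by
          linarith [mul_nonneg (sq_nonneg ‖κ‖) hfriction]
      _ ≤ (1 + ‖κ‖ ^ 2) * C := by gcongr
  refine ⟨d, hd, ?_⟩
  calc d + lam * ‖κ‖ ^ 2 * ‖ρ t‖ ^ 2 ≤ d + T / 2 * ‖κ‖ ^ 2 * ‖ρ t‖ ^ 2 := by gcongr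
    _ ≤ q * (⟪ρ t • κ, E⟫_ℂ).re + (m * ‖κ‖ ^ 2 + (m * ν) ^ 2 / (2 * T)) * ‖u t‖ ^ 2 := hle
    _ ≤ q * (⟪ρ t • κ, E⟫_ℂ).re + (1 + ‖κ‖ ^ 2) * C * ‖u t‖ ^ 2 := by gcongr

end IsFluidModeAt

lemma sum_mul_re_inner_of_gauss {ι : Type*} [Fintype ι] {q : ι → ℝ} {ρ : ι → ℂ} {κ E : H}
    (gauss : ⟪κ, E⟫_ℂ = -(4 * π * ∑ α, q α * ρ α)) :
    ∑ α, q α * (⟪ρ α • κ, E⟫_ℂ).re = -(4 * π * ‖∑ α, q α * ρ α‖ ^ 2) := by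
  calc ∑ α, q α * (⟪ρ α • κ, E⟫_ℂ).re
      = (conj (∑ α, q α * ρ α) * ⟪κ, E⟫_ℂ).re := by
        simp only [inner_smul_left, map_sum, map_mul, Complex.conj_ofReal, Finset.sum_mul,
          Complex.re_sum, mul_assoc, Complex.re_ofReal_mul]
    _ = (-((4 * π * ‖∑ α, q α * ρ α‖ ^ 2 : ℝ) : ℂ)).re := by
        rw [gauss]
        push_cast
        rw [← Complex.conj_mul']
        ring_nf
    _ = -(4 * π * ‖∑ α, q α * ρ α‖ ^ 2) := by rw [Complex.neg_re, Complex.ofReal_re]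

theorem stmt_14_general {ι : Type*} [Fintype ι] (m ν T q : ι → ℝ) (hm : ∀ α, 0 ≤ m α)
    (hT : ∀ α, 0 < T α) :
    ∃ lam C : ℝ, 0 < lam ∧ 0 < C ∧
      ∀ (κ E : H) (ρ : ι → ℝ → ℂ) (u : ι → ℝ → H) (t : ℝ),
        (∀ α, IsFluidModeAt (m α) (ν α) (T α) (q α) κ (ρ α) (u α) E t) →
        ⟪κ, E⟫_ℂ = -(4 * π * ∑ α, q α * ρ α t) →
        ∃ d, HasDerivAt
            (fun s ↦ (1 + ‖κ‖ ^ 2)⁻¹ * ∑ α, m α * (⟪ρ α s • κ, u α s⟫_ℂ).re) d t ∧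
          d + lam * (‖κ‖ ^ 2 / (1 + ‖κ‖ ^ 2)) * ∑ α, ‖ρ α t‖ ^ 2
            + 4 * π / (1 + ‖κ‖ ^ 2) * ‖∑ α, q α * ρ α t‖ ^ 2 ≤ C * ∑ α, ‖u α t‖ ^ 2 := by
  obtain ⟨lam, hlamT, hlam⟩ :
      ∃ lam : ℝ, (∀ α, lam ≤ T α / 2) ∧ 0 < lam :=
    have hsmall : ∀ᶠ lam in 𝓝[>] (0 : ℝ), ∀ α, lam ≤ T α / 2 := eventually_all.2 fun α ↦
      (eventually_le_nhds (half_pos (hT α))).filter_mono nhdsWithin_le_nhds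
    (hsmall.and self_mem_nhdsWithin).exists
  obtain ⟨C, hCm, hC⟩ :
      ∃ C, (∀ α, m α + (m α * ν α) ^ 2 / (2 * T α) ≤ C) ∧ 0 < C :=
    have hlarge : ∀ᶠ C in atTop, ∀ α, m α + (m α * ν α) ^ 2 / (2 * T α) ≤ C :=
      eventually_all.2 fun α ↦ eventually_ge_atTop _
    (hlarge.and (eventually_gt_atTop 0)).exists
  refine ⟨lam, C, hlam, hC, fun κ E ρ u t hfluid gauss ↦ ?_⟩
  choose d hd hle using fun α ↦
    (hfluid α).density_dissipation_uniform (hm α) (hT α) (hlamT α) (hCm α)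
  refine ⟨_, (HasDerivAt.fun_sum fun α _ ↦ hd α).const_mul _, ?_⟩
  have htotal : ∑ α, d α + lam * ‖κ‖ ^ 2 * ∑ α, ‖ρ α t‖ ^ 2
      ≤ -(4 * π * ‖∑ α, q α * ρ α t‖ ^ 2) + (1 + ‖κ‖ ^ 2) * C * ∑ α, ‖u α t‖ ^ 2 := by
    rw [← sum_mul_re_inner_of_gauss gauss]
    simpa only [Finset.sum_add_distrib, ← Finset.mul_sum] using
      Finset.sum_le_sum fun α (_ : α ∈ Finset.univ) ↦ hle α
  calc (1 + ‖κ‖ ^ 2)⁻¹ * ∑ α, d α + lam * (‖κ‖ ^ 2 / (1 + ‖κ‖ ^ 2)) * ∑ α, ‖ρ α t‖ ^ 2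
        + 4 * π / (1 + ‖κ‖ ^ 2) * ‖∑ α, q α * ρ α t‖ ^ 2
      = (∑ α, d α + lam * ‖κ‖ ^ 2 * ∑ α, ‖ρ α t‖ ^ 2 + 4 * π * ‖∑ α, q α * ρ α t‖ ^ 2)
          / (1 + ‖κ‖ ^ 2) := by ring
    _ ≤ C * ∑ α, ‖u α t‖ ^ 2 := by
      rw [div_le_iff₀ (by positivity)]
      linarith

end InnerProductSpace

section Coordinates

open WithLp

lemma inner_toLp_ikv (k : Fin 3 → ℝ) (v : Fin 3 → ℂ) :
    ⟪toLp 2 (ikv k), toLp 2 v⟫_ℂ = -(Complex.I * ∑ j, (k j : ℂ) * v j) := by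
  simp only [PiLp.inner_apply, RCLike.inner_apply, ikv, map_mul, Complex.conj_I,
    Complex.conj_ofReal, Finset.mul_sum, ← Finset.sum_neg_distrib]
  exact Finset.sum_congr rfl fun j _ ↦ by ring

lemma norm_sq_toLp_ikv (k : Fin 3 → ℝ) : ‖toLp 2 (ikv k)‖ ^ 2 = ∑ j, k j ^ 2 := by
  simp [EuclideanSpace.norm_sq_eq, ikv]

lemma hsq_eq_norm_sq (v : Fin 3 → ℂ) : hsq v = ‖toLp 2 v‖ ^ 2 := by
  simp only [hsq, EuclideanSpace.norm_sq_eq, Complex.normSq_eq_norm_sq]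

lemma hre_eq_re_inner (u : Fin 3 → ℂ) (k : Fin 3 → ℝ) (r : ℂ) :
    hre u (fun j ↦ Complex.I * (k j : ℂ) * r) = (⟪r • toLp 2 (ikv k), toLp 2 u⟫_ℂ).re := by
  simp only [hre, PiLp.inner_apply, RCLike.inner_apply, PiLp.smul_apply, ikv, smul_eq_mul,
    mul_comm r]

lemma isFluidModeAt_toLp {m ν T q t : ℝ} {k : Fin 3 → ℝ} {ρ : ℝ → ℂ} {u : ℝ → Fin 3 → ℂ}
    {E : Fin 3 → ℂ} (hρ : DifferentiableAt ℝ ρ t) (hu : DifferentiableAt ℝ u t)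
    (continuity : deriv ρ t + Complex.I * ∑ j, (k j : ℂ) * u t j = 0)
    (momentum : ∀ j, (m : ℂ) * deriv u t j + (T : ℂ) * (Complex.I * (k j : ℂ)) * ρ t
      - (q : ℂ) * E j + (m : ℂ) * (ν : ℂ) * u t j = 0) :
    IsFluidModeAt m ν T q (toLp 2 (ikv k)) ρ (fun s ↦ toLp 2 (u s)) (toLp 2 E) t where
  continuity := by
    rw [inner_toLp_ikv, ← eq_neg_of_add_eq_zero_left continuity]
    exact hρ.hasDerivAt
  momentum := by
    refine (((PiLp.hasFDerivAt_toLp (𝕜 := ℝ) 2 (u t)).comp_hasDerivAt t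
      hu.hasDerivAt).const_smul (m : ℂ)).congr_deriv ?_
    ext j
    change (m : ℂ) * deriv u t j = q * E j - T * (ρ t * (Complex.I * k j)) - (m * ν : ℝ) * u t j
    push_cast
    linear_combination momentum j

end Coordinates

/-- Dissipation of the densities through the interaction functional, with constants
depending only on the physical parameters (not on the frequency `k`), along solutions
of the Fourier-transformed linearized two-fluid Euler–Maxwell system. -/
theorem stmt_14 (mi me νi νe Ti Te e c : ℝ)
    (hmi : 0 < mi) (hme : 0 < me) (hνi : 0 < νi) (hνe : 0 < νe)
    (hTi : 0 < Ti) (hTe : 0 < Te) (he : 0 < e) (hc : 0 < c) :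
    ∃ lam C : ℝ, 0 < lam ∧ 0 < C ∧
      ∀ (k : Fin 3 → ℝ) (ρi ρe : ℝ → ℂ) (ui ue E B : ℝ → Fin 3 → ℂ),
        Differentiable ℝ ρi → Differentiable ℝ ρe →
        Differentiable ℝ ui → Differentiable ℝ ue →
        Differentiable ℝ E → Differentiable ℝ B →
        (∀ t : ℝ, deriv ρi t + Complex.I * ∑ j, (k j : ℂ) * ui t j = 0) →
        (∀ t : ℝ, deriv ρe t + Complex.I * ∑ j, (k j : ℂ) * ue t j = 0) →
        (∀ (t : ℝ) (j : Fin 3), (mi : ℂ) * deriv ui t j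
          + (Ti : ℂ) * (Complex.I * (k j : ℂ)) * ρi t
          - (e : ℂ) * E t j + (mi : ℂ) * (νi : ℂ) * ui t j = 0) →
        (∀ (t : ℝ) (j : Fin 3), (me : ℂ) * deriv ue t j
          + (Te : ℂ) * (Complex.I * (k j : ℂ)) * ρe t
          + (e : ℂ) * E t j + (me : ℂ) * (νe : ℂ) * ue t j = 0) →
        (∀ (t : ℝ) (j : Fin 3), deriv E t j - (c : ℂ) * cross3 (ikv k) (B t) j
          + 4 * (π : ℂ) * ((e : ℂ) * ui t j - (e : ℂ) * ue t j) = 0) →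
        (∀ (t : ℝ) (j : Fin 3), deriv B t j + (c : ℂ) * cross3 (ikv k) (E t) j = 0) →
        (∀ t : ℝ, Complex.I * ∑ j, (k j : ℂ) * E t j
          = 4 * (π : ℂ) * ((e : ℂ) * ρi t - (e : ℂ) * ρe t)) →
        (∀ t : ℝ, Complex.I * ∑ j, (k j : ℂ) * B t j = 0) →
        (let ksq : ℝ := ∑ j, (k j) ^ 2
         let If : ℝ → ℝ := fun t =>
           (1 + ksq)⁻¹ *
             (mi * hre (ui t) (fun j => Complex.I * (k j : ℂ) * ρi t)
               + me * hre (ue t) (fun j => Complex.I * (k j : ℂ) * ρe t))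
         ∀ t : ℝ, 0 < t → ∃ d : ℝ, HasDerivAt If d t ∧
           d + lam * (ksq / (1 + ksq)) * (Complex.normSq (ρi t) + Complex.normSq (ρe t))
             + (4 * π / (1 + ksq)) * Complex.normSq ((e : ℂ) * ρi t - (e : ℂ) * ρe t)
             ≤ C * (hsq (ui t) + hsq (ue t))) := by
  obtain ⟨lam, C, hlam, hC, dissipation⟩ := stmt_14_general (H := EuclideanSpace ℂ (Fin 3))
    ![mi, me] ![νi, νe] ![Ti, Te] ![e, -e]
    (Fin.forall_fin_two.2 ⟨hmi.le, hme.le⟩) (Fin.forall_fin_two.2 ⟨hTi, hTe⟩)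
  refine ⟨lam, C, hlam, hC, ?_⟩
  intro k ρi ρe ui ue E B hρi hρe hui hue _ _
    continuity_i continuity_e momentum_i momentum_e _ _ gauss _ ksq If t _
  have ions : IsFluidModeAt mi νi Ti e (WithLp.toLp 2 (ikv k)) ρi _ _ t :=
    isFluidModeAt_toLp (hρi t) (hui t) (continuity_i t) (momentum_i t)
  have electrons : IsFluidModeAt me νe Te (-e) (WithLp.toLp 2 (ikv k)) ρe _ _ t :=
    isFluidModeAt_toLp (E := E t) (hρe t) (hue t) (continuity_e t) (by simpa using momentum_e t)
  have hdecay := dissipation _ _ ![ρi, ρe] ![_, _] t (Fin.forall_fin_two.2 ⟨ions, electrons⟩)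
    (by simp [inner_toLp_ikv, gauss, sub_eq_add_neg])
  simpa [If, ksq, hre_eq_re_inner, hsq_eq_norm_sq, norm_sq_toLp_ikv, Complex.normSq_eq_norm_sq,
    sub_eq_add_neg] using hdecay
end

section
/- Fix k ∈ ℝ³ and positive constants m_i, m_e, ν_i, ν_e, e, c. Suppose û_i, û_e, Ê, B̂ : ℝ → ℂ³ are differentiable, k·B̂(t) = 0 for all t, and for all t: m_i û_i'(t) − e Ê(t) + m_iν_i û_i(t) = 0; m_e û_e'(t) + e Ê(t) + m_eν_e û_e(t) = 0; Ê'(t) − c (i k)×B̂(t) + 4π e (û_i(t) − û_e(t)) = 0; B̂'(t) + c (i k)×Ê(t) = 0. Then B̂ is four times differentiable and satisfies, for all t, the fourth-order linear ODE: B̂''''(t) + (ν_i + ν_e) B̂'''(t) + (c²|k|² + 4πe²/m_i + 4πe²/m_e + ν_iν_e) B̂''(t) + ((ν_i + ν_e) c²|k|² + 4π e²ν_e/m_i + 4π e²ν_i/m_e) B̂'(t) + ν_iν_e c²|k|² B̂(t) = 0. -/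
open Real Complex

/-!
Applying the curl to each momentum equation turns the curl of the partial current of a species into
a quantity that relaxes at its collision rate and is driven by `B'` alone, since Faraday's law
replaces the curl of `E` by `B'`. Differentiating Faraday's law and inserting Ampère's law makes `B`
an oscillator forced by the sum of these two quantities. With `D = d/dt` this reads
`(D² + ω) B = P + Q`, `(D + μ) P = -α D B`, `(D + ν) Q = -β D B`, and applying `(D + μ)(D + ν)` to
the first equation eliminates `P` and `Q`.
-/

section Calculus

variable {𝕜 V : Type*} [NontriviallyNormedField 𝕜] [NormedAddCommGroup V] [NormedSpace 𝕜 V]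

section Oscillator

variable {ω α β μ ν : 𝕜} {f P Q : 𝕜 → V}

theorem hasDerivAt_deriv_deriv_of_forced_oscillator (hf : Differentiable 𝕜 f)
    (hosc : ∀ t, HasDerivAt (deriv f) (P t + Q t - ω • f t) t)
    (hP : ∀ t, HasDerivAt P (-(α • deriv f t) - μ • P t) t)
    (hQ : ∀ t, HasDerivAt Q (-(β • deriv f t) - ν • Q t) t) (t : 𝕜) :
    HasDerivAt (deriv (deriv f)) (-((ω + α + β) • deriv f t) - μ • P t - ν • Q t) t := by
  have hf'' : deriv (deriv f) = fun s => P s + Q s - ω • f s := funext fun s => (hosc s).deriv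
  rw [hf'']
  refine (((hP t).add (hQ t)).sub ((hf t).hasDerivAt.const_smul ω)).congr_deriv ?_
  module

theorem hasDerivAt_deriv_deriv_deriv_of_forced_oscillator (hf : Differentiable 𝕜 f)
    (hosc : ∀ t, HasDerivAt (deriv f) (P t + Q t - ω • f t) t)
    (hP : ∀ t, HasDerivAt P (-(α • deriv f t) - μ • P t) t)
    (hQ : ∀ t, HasDerivAt Q (-(β • deriv f t) - ν • Q t) t) (t : 𝕜) :
    HasDerivAt (deriv (deriv (deriv f)))
      (-((ω + α + β) • deriv (deriv f) t) + (μ * α + ν * β) • deriv f t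
        + μ ^ 2 • P t + ν ^ 2 • Q t) t := by
  have hf''' : deriv (deriv (deriv f)) =
      fun s => -((ω + α + β) • deriv f s) - μ • P s - ν • Q s :=
    funext fun s => (hasDerivAt_deriv_deriv_of_forced_oscillator hf hosc hP hQ s).deriv
  rw [hf''']
  refine ((((hosc t).const_smul (ω + α + β)).neg.sub ((hP t).const_smul μ)).sub
    ((hQ t).const_smul ν)).congr_deriv ?_
  rw [(hosc t).deriv]
  module

theorem fourth_order_ode_of_forced_oscillator (hf : Differentiable 𝕜 f)
    (hosc : ∀ t, HasDerivAt (deriv f) (P t + Q t - ω • f t) t)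
    (hP : ∀ t, HasDerivAt P (-(α • deriv f t) - μ • P t) t)
    (hQ : ∀ t, HasDerivAt Q (-(β • deriv f t) - ν • Q t) t) (t : 𝕜) :
    deriv (deriv (deriv (deriv f))) t + (μ + ν) • deriv (deriv (deriv f)) t
      + (ω + α + β + μ * ν) • deriv (deriv f) t
      + ((μ + ν) * ω + α * ν + β * μ) • deriv f t + (μ * ν * ω) • f t = 0 := by
  rw [(hasDerivAt_deriv_deriv_deriv_of_forced_oscillator hf hosc hP hQ t).deriv,
    (hasDerivAt_deriv_deriv_of_forced_oscillator hf hosc hP hQ t).deriv, (hosc t).deriv]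
  module

end Oscillator

section Maxwell

variable {L : V →L[𝕜] V} {c σ : 𝕜} {E B : 𝕜 → V}

theorem hasDerivAt_curl_current {m q ν : 𝕜} (hm : m ≠ 0) {u : 𝕜 → V} (hu : Differentiable 𝕜 u)
    (hmomentum : ∀ t, m • deriv u t - q • E t + (m * ν) • u t = 0)
    (hfaraday : ∀ t, deriv B t + c • L (E t) = 0) (t : 𝕜) :
    HasDerivAt (fun s => (σ * q * c) • L (u s))
      (-((σ * q ^ 2 / m) • deriv B t) - ν • (σ * q * c) • L (u t)) t := by
  have hu' : deriv u t = (q / m) • E t - ν • u t := by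
    linear_combination (norm := skip) m⁻¹ • hmomentum t
    match_scalars <;> field_simp <;> ring
  have hB' : deriv B t = -(c • L (E t)) := eq_neg_of_add_eq_zero_left (hfaraday t)
  refine ((L.hasFDerivAt.comp_hasDerivAt t (hu t).hasDerivAt).const_smul _).congr_deriv ?_
  rw [hu', hB', map_sub, map_smul, map_smul]
  module

theorem hasDerivAt_deriv_magnetic_field {κ : 𝕜} {J : 𝕜 → V} (hE : Differentiable 𝕜 E)
    (hcurl : ∀ t, L (L (B t)) = κ • B t)
    (hampere : ∀ t, deriv E t - c • L (B t) + σ • J t = 0)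
    (hfaraday : ∀ t, deriv B t + c • L (E t) = 0) (t : 𝕜) :
    HasDerivAt (deriv B) ((σ * c) • L (J t) - (c ^ 2 * κ) • B t) t := by
  have hB' : deriv B = fun s => -(c • L (E s)) :=
    funext fun s => eq_neg_of_add_eq_zero_left (hfaraday s)
  have hE' : deriv E t = c • L (B t) - σ • J t := by
    linear_combination (norm := module) hampere t
  rw [hB']
  refine ((L.hasFDerivAt.comp_hasDerivAt t (hE t).hasDerivAt).const_smul c).neg.congr_deriv ?_
  rw [hE', map_sub, map_smul, map_smul, hcurl]
  module

/-- The curl is an arbitrary continuous linear map `L` that squares to `κ` along `B`, the species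
have arbitrary charges `q₁` and `q₂`, and `σ` is the coupling constant in Ampère's law. -/
theorem stmt_15_general {κ m₁ m₂ q₁ q₂ ν₁ ν₂ : 𝕜} (hm₁ : m₁ ≠ 0) (hm₂ : m₂ ≠ 0) {u₁ u₂ : 𝕜 → V}
    (hu₁ : Differentiable 𝕜 u₁) (hu₂ : Differentiable 𝕜 u₂)
    (hE : Differentiable 𝕜 E) (hB : Differentiable 𝕜 B)
    (hcurl : ∀ t, L (L (B t)) = κ • B t)
    (hmomentum₁ : ∀ t, m₁ • deriv u₁ t - q₁ • E t + (m₁ * ν₁) • u₁ t = 0)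
    (hmomentum₂ : ∀ t, m₂ • deriv u₂ t - q₂ • E t + (m₂ * ν₂) • u₂ t = 0)
    (hampere : ∀ t, deriv E t - c • L (B t) + σ • (q₁ • u₁ t + q₂ • u₂ t) = 0)
    (hfaraday : ∀ t, deriv B t + c • L (E t) = 0) :
    Differentiable 𝕜 (deriv B) ∧ Differentiable 𝕜 (deriv (deriv B)) ∧
      Differentiable 𝕜 (deriv (deriv (deriv B))) ∧
      ∀ t, deriv (deriv (deriv (deriv B))) t + (ν₁ + ν₂) • deriv (deriv (deriv B)) t
        + (c ^ 2 * κ + σ * q₁ ^ 2 / m₁ + σ * q₂ ^ 2 / m₂ + ν₁ * ν₂) • deriv (deriv B) t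
        + ((ν₁ + ν₂) * c ^ 2 * κ + σ * q₁ ^ 2 * ν₂ / m₁ + σ * q₂ ^ 2 * ν₁ / m₂) • deriv B t
        + (ν₁ * ν₂ * c ^ 2 * κ) • B t = 0 := by
  have hP := hasDerivAt_curl_current (σ := σ) hm₁ hu₁ hmomentum₁ hfaraday
  have hQ := hasDerivAt_curl_current (σ := σ) hm₂ hu₂ hmomentum₂ hfaraday
  have hosc : ∀ t, HasDerivAt (deriv B)
      ((σ * q₁ * c) • L (u₁ t) + (σ * q₂ * c) • L (u₂ t) - (c ^ 2 * κ) • B t) t := fun t => by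
    refine (hasDerivAt_deriv_magnetic_field hE hcurl hampere hfaraday t).congr_deriv ?_
    rw [map_add, map_smul, map_smul]
    module
  refine ⟨fun t => (hosc t).differentiableAt,
    fun t => (hasDerivAt_deriv_deriv_of_forced_oscillator hB hosc hP hQ t).differentiableAt,
    fun t => (hasDerivAt_deriv_deriv_deriv_of_forced_oscillator hB hosc hP hQ t).differentiableAt,
    fun t => ?_⟩
  rw [← fourth_order_ode_of_forced_oscillator hB hosc hP hQ t]
  module

end Maxwell

end Calculus

section CrossProduct

open scoped Matrix

/-- The map `v ↦ a × v` on `ℂ³`, the Fourier symbol of the curl when `a = i k`. It is taken as a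
real linear map because time is a real variable. -/
noncomputable def crossLeft (a : Fin 3 → ℂ) : (Fin 3 → ℂ) →L[ℝ] (Fin 3 → ℂ) :=
  ((crossProduct a).restrictScalars ℝ).toContinuousLinearMap

theorem crossLeft_apply (a v : Fin 3 → ℂ) : crossLeft a v = cross3 a v :=
  rfl

theorem crossLeft_crossLeft (a v : Fin 3 → ℂ) :
    crossLeft a (crossLeft a v) = (a ⬝ᵥ v) • a - (a ⬝ᵥ a) • v :=
  cross_cross_eq_smul_sub_smul' a a v

theorem ikv_dotProduct (k : Fin 3 → ℝ) (v : Fin 3 → ℂ) :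
    ikv k ⬝ᵥ v = I * ∑ j, (k j : ℂ) * v j := by
  simp only [dotProduct, ikv, Finset.mul_sum, mul_assoc]

theorem ikv_dotProduct_self (k : Fin 3 → ℝ) : ikv k ⬝ᵥ ikv k = -((∑ j, k j ^ 2 : ℝ) : ℂ) := by
  have hterm (j : Fin 3) : ikv k j * ikv k j = -((k j ^ 2 : ℝ) : ℂ) := by
    push_cast [ikv]
    linear_combination (k j : ℂ) ^ 2 * I_sq
  simp only [dotProduct, hterm, Finset.sum_neg_distrib, ofReal_sum]

theorem crossLeft_ikv_crossLeft_ikv {k : Fin 3 → ℝ} {v : Fin 3 → ℂ}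
    (hv : ∑ j, (k j : ℂ) * v j = 0) :
    crossLeft (ikv k) (crossLeft (ikv k) v) = (∑ j, k j ^ 2) • v := by
  rw [crossLeft_crossLeft, ikv_dotProduct, ikv_dotProduct_self, hv, mul_zero, zero_smul, zero_sub,
    neg_smul, neg_neg, coe_smul]

end CrossProduct

/-- Reduction of the Fourier-transformed transverse electromagnetic subsystem of the
linearized two-fluid Euler–Maxwell system to a fourth-order linear ODE for the
magnetic field `B̂`. -/
theorem stmt_15 (k : Fin 3 → ℝ) (mi me νi νe e c : ℝ)
    (hmi : 0 < mi) (hme : 0 < me) (hνi : 0 < νi) (hνe : 0 < νe)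
    (he : 0 < e) (hc : 0 < c)
    (ui ue E B : ℝ → Fin 3 → ℂ)
    (hui : Differentiable ℝ ui) (hue : Differentiable ℝ ue)
    (hE : Differentiable ℝ E) (hB : Differentiable ℝ B)
    (hBorth : ∀ t : ℝ, ∑ j, (k j : ℂ) * B t j = 0)
    (h1 : ∀ (t : ℝ) (j : Fin 3), (mi : ℂ) * deriv ui t j - (e : ℂ) * E t j
      + (mi : ℂ) * (νi : ℂ) * ui t j = 0)
    (h2 : ∀ (t : ℝ) (j : Fin 3), (me : ℂ) * deriv ue t j + (e : ℂ) * E t j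
      + (me : ℂ) * (νe : ℂ) * ue t j = 0)
    (h3 : ∀ (t : ℝ) (j : Fin 3), deriv E t j - (c : ℂ) * cross3 (ikv k) (B t) j
      + 4 * (π : ℂ) * (e : ℂ) * (ui t j - ue t j) = 0)
    (h4 : ∀ (t : ℝ) (j : Fin 3),
      deriv B t j + (c : ℂ) * cross3 (ikv k) (E t) j = 0) :
    let ksq : ℝ := ∑ j, (k j) ^ 2
    Differentiable ℝ (deriv B) ∧ Differentiable ℝ (deriv (deriv B)) ∧
      Differentiable ℝ (deriv (deriv (deriv B))) ∧
      ∀ (t : ℝ) (j : Fin 3),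
        deriv (deriv (deriv (deriv B))) t j
          + ((νi + νe : ℝ) : ℂ) * deriv (deriv (deriv B)) t j
          + ((c ^ 2 * ksq + 4 * π * e ^ 2 / mi + 4 * π * e ^ 2 / me + νi * νe : ℝ) : ℂ) *
              deriv (deriv B) t j
          + (((νi + νe) * c ^ 2 * ksq + 4 * π * e ^ 2 * νe / mi
              + 4 * π * e ^ 2 * νi / me : ℝ) : ℂ) * deriv B t j
          + ((νi * νe * c ^ 2 * ksq : ℝ) : ℂ) * B t j = 0 := by
  intro ksq
  obtain ⟨hdiff₁, hdiff₂, hdiff₃, hode⟩ := stmt_15_general (L := crossLeft (ikv k)) (κ := ksq)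
    (σ := 4 * π) (q₁ := e) (q₂ := -e) hmi.ne' hme.ne' hui hue hE hB
    (fun t => crossLeft_ikv_crossLeft_ikv (hBorth t))
    (fun t => funext fun j => by simpa using h1 t j)
    (fun t => funext fun j => by simpa using h2 t j)
    (fun t => funext fun j => by
      simpa [crossLeft_apply, ← sub_eq_add_neg, ← mul_sub, mul_assoc] using h3 t j)
    (fun t => funext fun j => by simpa [crossLeft_apply] using h4 t j)
  refine ⟨hdiff₁, hdiff₂, hdiff₃, fun t j => ?_⟩
  simpa only [neg_sq, Pi.add_apply, Pi.smul_apply, Pi.zero_apply, real_smul]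
    using congrFun (hode t) j
end
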